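/- Let n ≥ 1 and let V : ℝⁿ → ℝ be smooth. Set S_h = {(q,p) ∈ ℝⁿ × ℝⁿ : V(q) + ‖p‖²/2 = h} for h ∈ ℝ. Assume S_h is compact, that S_h is a regular level set (for every (q,p) ∈ S_h one has (∇V(q), p) ≠ (0,0)), and that S_h meets the zero section, i.e. there exists q₀ ∈ ℝⁿ with V(q₀) = h. Then there exist l > 0 and a nonconstant C² curve q : [0,l] → ℝⁿ such that q''(t) = −∇V(q(t)) for all t ∈ [0,l], q'(0) = 0, q'(l) = 0, and V(q(0)) + ‖q'(0)‖²/2 = h (a brake orbit on the energy level h). -/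

import Mathlib

open Set


theorem bo_det_poly {E : Type*} [NormedAddCommGroup E] [NormedSpace ℝ E] [FiniteDimensional ℝ E]
    (M : E →L[ℝ] E) : ∃ p : Polynomial ℝ, p.natDegree ≤ Module.finrank ℝ E ∧
      ∀ t : ℝ, (ContinuousLinearMap.id ℝ E + t • M).det = p.eval t := by
  classical
  let b := Module.finBasis ℝ E
  let A := LinearMap.toMatrix b b (M : E →ₗ[ℝ] E)
  refine ⟨((Polynomial.X : Polynomial ℝ) • A.map Polynomial.C
    + (1 : Matrix _ _ ℝ).map Polynomial.C).det, ?_, ?_⟩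
  · simpa using Polynomial.natDegree_det_X_add_C_le A 1
  · intro t
    rw [← Polynomial.coe_evalRingHom, RingHom.map_det]
    have : (ContinuousLinearMap.id ℝ E + t • M).det
        = (LinearMap.toMatrix b b ((ContinuousLinearMap.id ℝ E + t • M : E →L[ℝ] E) : E →ₗ[ℝ] E)).det := by
      rw [LinearMap.det_toMatrix]
    rw [this]
    congr 1
    have h2 : ((ContinuousLinearMap.id ℝ E + t • M : E →L[ℝ] E) : E →ₗ[ℝ] E)
      = LinearMap.id + t • (M : E →ₗ[ℝ] E) := rfl
    rw [h2, map_add, map_smul, LinearMap.toMatrix_id]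
    ext i j
    simp [A, Matrix.add_apply, Matrix.map_apply, Matrix.one_apply]
    split_ifs <;> simp [add_comm, mul_comm]

/-- A family of polynomials of bounded degree is determined by interpolation. -/
theorem bo_interp (N : ℕ) (t0 : ℝ) (ht0 : 0 < t0) :
    ∃ (τ : ℕ → ℝ) (L : ℕ → ℝ), (∀ i ∈ Finset.range (N+1), 0 < τ i ∧ τ i < t0) ∧
      ∀ p : Polynomial ℝ, p.natDegree ≤ N →
        p.eval 1 = ∑ i ∈ Finset.range (N+1), L i * p.eval (τ i) := by
  let τ : ℕ → ℝ := fun i => t0 / (i + 2)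
  have hinj : Set.InjOn τ (Finset.range (N+1) : Set ℕ) := by
    intro i _ j _ hij
    have h1 : (i : ℝ) + 2 ≠ 0 := by positivity
    have h2 : (j : ℝ) + 2 ≠ 0 := by positivity
    simp only [τ] at hij
    field_simp at hij
    have : (i : ℝ) = j := by nlinarith
    exact_mod_cast this
  refine ⟨τ, fun i => (Lagrange.basis (Finset.range (N+1)) τ i).eval 1, ?_, ?_⟩
  · intro i _
    constructor
    · positivity
    · rw [div_lt_iff₀ (by positivity)]
      have : (0 : ℝ) ≤ i := by positivity
      nlinarith
  · intro p hp
    have hd : p.degree < (Finset.range (N+1)).card := by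
      rw [Finset.card_range]
      refine lt_of_le_of_lt Polynomial.degree_le_natDegree ?_
      exact_mod_cast Nat.lt_succ_of_le hp
    conv_lhs => rw [Lagrange.eq_interpolate hinj hd]
    simp [Lagrange.interpolate_apply, Polynomial.eval_finsetSum, mul_comm]

theorem bo_no_retraction {E : Type*} [NormedAddCommGroup E] [InnerProductSpace ℝ E]
    [FiniteDimensional ℝ E] (r : E → E) (hr : ContDiff ℝ 1 r) (R : ℝ) (hR : 0 < R)
    (h1 : ∀ z, ‖z‖ = R → r z = z) (h2 : ∀ z, ‖r z‖ = R) : False := by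
  classical
  let : MeasurableSpace E := borel E
  have : BorelSpace E := ⟨rfl⟩
  let μ : MeasureTheory.Measure E := MeasureTheory.Measure.addHaar
  let B := Metric.closedBall (0 : E) R
  have hBc : IsCompact B := isCompact_closedBall 0 R
  let h : E → E := fun z => r z - z
  have hh : ContDiff ℝ 1 h := hr.sub contDiff_id
  let D : E → E →L[ℝ] E := fun z => fderiv ℝ h z
  have hDc : Continuous D := hh.continuous_fderiv one_ne_zero
  have hD : ∀ z, HasFDerivAt h (D z) z := fun z =>
    (hh.differentiable one_ne_zero z).hasFDerivAt
  -- bound on derivative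
  obtain ⟨L0, hL0⟩ := hBc.exists_bound_of_continuousOn hDc.continuousOn
  let L := max L0 1
  have hLpos : 0 < L := lt_of_lt_of_le one_pos (le_max_right _ _)
  have hL : ∀ z ∈ B, ‖D z‖ ≤ L := fun z hz => (hL0 z hz).trans (le_max_left _ _)
  have hlipB : ∀ x ∈ B, ∀ y ∈ B, ‖h y - h x‖ ≤ L * ‖y - x‖ := by
    intro x hx y hy
    exact (convex_closedBall (0:E) R).norm_image_sub_le_of_norm_hasFDerivWithin_le
      (fun z _ => (hD z).hasFDerivWithinAt) hL hx hy
  -- extension by zero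
  let k : E → E := fun z => if ‖z‖ ≤ R then h z else 0
  have hk_in : ∀ z, ‖z‖ ≤ R → k z = h z := fun z hz => if_pos hz
  have hk_out : ∀ z, R ≤ ‖z‖ → k z = 0 := by
    intro z hz
    by_cases hz' : ‖z‖ ≤ R
    · rw [hk_in z hz']
      simp [h, h1 z (le_antisymm hz' hz)]
    · exact if_neg hz'
  have hcross : ∀ x y, ‖x‖ ≤ R → R ≤ ‖y‖ → ‖k y - k x‖ ≤ L * ‖y - x‖ := by
    intro x y hx hy
    -- intermediate point on the sphere
    have hcont : Continuous fun s : ℝ => ‖x + s • (y - x)‖ := by fun_prop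
    have hmem : R ∈ Icc (‖x + (0:ℝ) • (y - x)‖) (‖x + (1:ℝ) • (y - x)‖) := by
      constructor <;> simpa
    obtain ⟨s, hs, hsR⟩ := intermediate_value_Icc (zero_le_one (α := ℝ)) hcont.continuousOn hmem
    set w := x + s • (y - x) with hw
    have hsR' : ‖w‖ = R := hsR
    have e1 : k w = 0 := hk_out w hsR'.ge
    have := hlipB x (by simpa [B] using hx) w (by simp [B, hsR'])
    rw [hk_out y hy, ← e1, hk_in x hx, hk_in w hsR'.le]
    refine this.trans ?_
    apply mul_le_mul_of_nonneg_left _ hLpos.le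
    have : w - x = s • (y - x) := by simp [hw]
    rw [this, norm_smul, Real.norm_eq_abs, abs_of_nonneg hs.1]
    have := norm_nonneg (y - x)
    nlinarith [hs.2]
  have hklip : ∀ x y, ‖k y - k x‖ ≤ L * ‖y - x‖ := by
    intro x y
    rcases le_total ‖x‖ R with hx | hx <;> rcases le_total ‖y‖ R with hy | hy
    · rw [hk_in x hx, hk_in y hy]
      exact hlipB x (by simpa [B] using hx) y (by simpa [B] using hy)
    · exact hcross x y hx hy
    · rw [norm_sub_rev, norm_sub_rev y x]; exact hcross y x hy hx
    · rw [hk_out x hx, hk_out y hy]; simp; positivity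
  -- the maps f_t
  let f : ℝ → E → E := fun t z => z + t • k z
  have hinj : ∀ t, 0 < t → t < 1 / L → Function.Injective (f t) := by
    intro t ht htL x y hxy
    have htL' : t * L < 1 := by rwa [lt_div_iff₀ hLpos] at htL
    have e : y - x = - (t • (k y - k x)) := by
      have : x + t • k x = y + t • k y := hxy
      have h3 : y - x = t • k x - t • k y := by
        rw [sub_eq_sub_iff_add_eq_add, ← this, add_comm]
      rw [h3, smul_sub]; abel
    have : ‖y - x‖ ≤ t * L * ‖y - x‖ := by
      calc ‖y - x‖ = t * ‖k y - k x‖ := by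
            rw [e, norm_neg, norm_smul, Real.norm_eq_abs, abs_of_pos ht]
        _ ≤ t * (L * ‖y - x‖) := mul_le_mul_of_nonneg_left (hklip x y) ht.le
        _ = _ := by ring
    have h0 : ‖y - x‖ = 0 := by
      have := norm_nonneg (y - x)
      nlinarith
    exact (sub_eq_zero.mp (norm_eq_zero.mp h0)).symm
  have himage : ∀ t, 0 < t → t < 1 / L → f t '' B = B := by
    intro t ht htL
    have htL' : t * L < 1 := by rwa [lt_div_iff₀ hLpos] at htL
    apply Subset.antisymm
    · rintro _ ⟨z, hz, rfl⟩
      by_contra hcon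
      have hgt : R < ‖f t z‖ := by simpa [B] using hcon
      have e : f t (f t z) = f t z := by
        show f t z + t • k (f t z) = f t z
        rw [hk_out _ hgt.le]; simp
      have := hinj t ht htL e
      rw [this] at hgt
      exact absurd hgt (not_lt.mpr (by simpa [B] using hz))
    · intro y hy
      let g : E → E := fun z => y - t • k z
      have hg : ContractingWith (Real.toNNReal (t * L)) g := by
        refine ⟨by rw [← NNReal.coe_lt_coe, Real.coe_toNNReal _ (by positivity)]; simpa using htL', ?_⟩
        refine LipschitzWith.of_dist_le_mul fun a b => ?_
        rw [Real.coe_toNNReal _ (by positivity), dist_eq_norm, dist_eq_norm]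
        have : g a - g b = - (t • (k a - k b)) := by simp only [g, smul_sub]; abel
        rw [this, norm_neg, norm_smul, Real.norm_eq_abs, abs_of_pos ht, mul_assoc]
        exact mul_le_mul_of_nonneg_left (hklip b a) ht.le
      have hfix : g hg.fixedPoint = hg.fixedPoint := hg.fixedPoint_isFixedPt
      set z := ContractingWith.fixedPoint g hg with hz
      have hfz : f t z = y := by
        show z + t • k z = y
        have : y - t • k z = z := hfix
        exact (sub_eq_iff_eq_add.mp this).symm
      refine ⟨z, ?_, hfz⟩
      by_contra hcon
      have hgt : R < ‖z‖ := by simpa [B] using hcon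
      have : f t z = z := by
        show z + t • k z = z
        rw [hk_out _ hgt.le]; simp
      rw [this] at hfz
      rw [hfz] at hgt
      exact absurd hgt (not_lt.mpr (by simpa [B] using hy))
  let P : ℝ → E → ℝ := fun t z => (ContinuousLinearMap.id ℝ E + t • D z).det
  have hPc : ∀ t, Continuous (P t) := fun t => by
    have : Continuous fun z => (ContinuousLinearMap.id ℝ E + t • D z) := by fun_prop
    exact ContinuousLinearMap.continuous_det.comp this
  have hPpos : ∀ t, 0 < t → t < 1 / L → ∀ z ∈ B, 0 < P t z := by
    intro t ht htL z hz
    have htL' : t * L < 1 := by rwa [lt_div_iff₀ hLpos] at htL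
    have hne : ∀ s ∈ Icc 0 t, P s z ≠ 0 := by
      intro s hs h0
      obtain ⟨x, hx, hx0⟩ := LinearMap.bot_lt_ker_of_det_eq_zero
        (f := ((ContinuousLinearMap.id ℝ E + s • D z : E →L[ℝ] E) : E →ₗ[ℝ] E)) h0 |> fun hlt =>
          (Submodule.ne_bot_iff _).mp hlt.ne'
      have hx' : x + s • D z x = 0 := by simpa using hx
      have : ‖x‖ ≤ s * L * ‖x‖ := by
        have e : x = - (s • D z x) := eq_neg_of_add_eq_zero_left hx'
        calc ‖x‖ = s * ‖D z x‖ := by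
              conv_lhs => rw [e]
              rw [norm_neg, norm_smul, Real.norm_eq_abs, abs_of_nonneg hs.1]
          _ ≤ s * (L * ‖x‖) := mul_le_mul_of_nonneg_left
              ((D z).le_of_opNorm_le (hL z hz) x) hs.1
          _ = _ := by ring
      have hxpos : 0 < ‖x‖ := norm_pos_iff.mpr hx0
      have : s * L ≤ t * L := mul_le_mul_of_nonneg_right hs.2 hLpos.le
      nlinarith
    have hcs : Continuous fun s => P s z := by
      have : Continuous fun s : ℝ => (ContinuousLinearMap.id ℝ E + s • D z) := by fun_prop
      exact ContinuousLinearMap.continuous_det.comp this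
    have hP0 : P 0 z = 1 := by
      simp only [P, zero_smul, add_zero]
      exact LinearMap.det_id
    by_contra hneg
    push Not at hneg
    obtain ⟨s, hs, hs0⟩ := intermediate_value_Icc' ht.le hcs.continuousOn
      (show (0:ℝ) ∈ Icc (P t z) (P 0 z) from ⟨hneg, by rw [hP0]; norm_num⟩)
    exact hne s hs hs0
  have hintg : ∀ t, MeasureTheory.IntegrableOn (P t) B μ := fun t =>
    (hPc t).continuousOn.integrableOn_compact hBc
  have hvol : ∀ t, 0 < t → t < 1 / L → ∫ z in B, P t z ∂μ = μ.real B := by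
    intro t ht htL
    have hmeas : MeasurableSet B := Metric.isClosed_closedBall.measurableSet
    have key := MeasureTheory.lintegral_abs_det_fderiv_eq_addHaar_image μ hmeas
      (f := f t) (f' := fun z => ContinuousLinearMap.id ℝ E + t • D z)
      (by
        intro z hz
        have h3 : HasFDerivWithinAt (fun z => z + t • h z)
          (ContinuousLinearMap.id ℝ E + t • D z) B z :=
          ((hasFDerivAt_id z).add ((hD z).const_smul t)).hasFDerivWithinAt
        refine h3.congr ?_ ?_
        · intro x hx
          show x + t • k x = _
          rw [hk_in x (by simpa [B] using hx)]
        · show z + t • k z = _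
          rw [hk_in z (by simpa [B] using hz)])
      ((hinj t ht htL).injOn)
    rw [himage t ht htL] at key
    rw [MeasureTheory.integral_eq_lintegral_of_nonneg_ae, MeasureTheory.measureReal_def, ← key]
    · congr 1
      apply MeasureTheory.setLIntegral_congr_fun hmeas
      intro z hz
      show ENNReal.ofReal (P t z) = ENNReal.ofReal |P t z|
      rw [abs_of_pos (hPpos t ht htL z hz)]
    · filter_upwards [MeasureTheory.ae_restrict_mem hmeas] with z hz
      exact (hPpos t ht htL z hz).le
    · exact (hPc t).aestronglyMeasurable
  obtain ⟨τ, Lc, hτ, hinterp⟩ := bo_interp (Module.finrank ℝ E) (1 / L) (by positivity)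
  have hP1 : ∀ z, P 1 z = ∑ i ∈ Finset.range (Module.finrank ℝ E + 1), Lc i * P (τ i) z := by
    intro z
    obtain ⟨p, hp, hpe⟩ := bo_det_poly (D z)
    simp only [P, hpe]
    exact hinterp p hp
  have hsum1 : (1:ℝ) = ∑ i ∈ Finset.range (Module.finrank ℝ E + 1), Lc i := by
    simpa using hinterp 1 (by simp)
  have hI : ∫ z in B, P 1 z ∂μ = μ.real B := by
    simp only [hP1]
    rw [MeasureTheory.integral_finsetSum _ (fun i _ => (hintg (τ i)).const_mul (Lc i))]
    have : ∀ i ∈ Finset.range (Module.finrank ℝ E + 1),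
        ∫ z in B, Lc i * P (τ i) z ∂μ = Lc i * μ.real B := by
      intro i hi
      rw [MeasureTheory.integral_const_mul, hvol _ (hτ i hi).1 (hτ i hi).2]
    rw [Finset.sum_congr rfl this, ← Finset.sum_mul, ← hsum1, one_mul]
  have hzero : ∀ z, P 1 z = 0 := by
    intro z
    have hrd : HasFDerivAt r (ContinuousLinearMap.id ℝ E + (1:ℝ) • D z) z := by
      have := (hasFDerivAt_id z).add (hD z)
      simp only [one_smul]
      refine this.congr_of_eventuallyEq (Filter.Eventually.of_forall fun x => ?_)
      simp [h]
    have horth : ∀ x, inner ℝ (r z) ((ContinuousLinearMap.id ℝ E + (1:ℝ) • D z) x) = 0 := by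
      intro x
      have hc := hrd.inner ℝ hrd
      have hconst : (fun z => inner ℝ (r z) (r z)) = fun _ => R ^ 2 := by
        funext z; rw [real_inner_self_eq_norm_sq, h2]
      rw [hconst] at hc
      have := hc.unique (hasFDerivAt_const _ _)
      have := DFunLike.congr_fun this x
      simp [fderivInnerCLM_apply, real_inner_comm] at this
      simp only [add_apply, ContinuousLinearMap.id_apply, one_smul]
      rw [real_inner_comm] at this ⊢
      linarith
    by_contra hne
    have hs := (LinearMap.equivOfDetNeZero _ hne).surjective (r z)
    obtain ⟨x, hx⟩ := hs
    have := horth x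
    have hx' : (ContinuousLinearMap.id ℝ E + (1:ℝ) • D z) x = r z := hx
    rw [hx', real_inner_self_eq_norm_sq, h2] at this
    exact absurd this (by positivity)
  have : μ.real B = 0 := by rw [← hI]; simp [hzero]
  have hpos : 0 < μ.real B := by
    rw [MeasureTheory.measureReal_def]
    exact ENNReal.toReal_pos (Metric.measure_closedBall_pos μ 0 hR).ne' hBc.measure_lt_top.ne
  exact hpos.ne' this

theorem bo_hit {E : Type*} [NormedAddCommGroup E] [InnerProductSpace ℝ E]
    [FiniteDimensional ℝ E] (Φ : E → E) (hΦ : Continuous Φ) (R : ℝ) (hR : 0 < R)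
    (hb : ∀ z, ‖z‖ = R → ∀ a b : ℝ, 0 ≤ a → 0 ≤ b → 0 < a + b → a • Φ z + b • z ≠ 0) :
    ∃ z, ‖z‖ ≤ R ∧ Φ z = 0 := by
  by_contra hcon
  push Not at hcon
  let c : E → ℝ := fun z => R / max R ‖z‖
  let s : E → ℝ := fun z => min 1 (max 0 (‖z‖ / R - 1))
  have hmax : ∀ z : E, 0 < max R ‖z‖ := fun z => lt_of_lt_of_le hR (le_max_left _ _)
  let Ψ : E → E := fun z => (1 - s z) • Φ (c z • z) + s z • z
  have hcc : Continuous c := by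
    refine continuous_const.div (by fun_prop) (fun z => (hmax z).ne')
  have hsc : Continuous s := by fun_prop
  have hΨc : Continuous Ψ := by fun_prop
  have hs0 : ∀ z, 0 ≤ s z := fun z => le_min zero_le_one (le_max_left _ _)
  have hs1 : ∀ z, s z ≤ 1 := fun z => min_le_left _ _
  have hΨne : ∀ z, Ψ z ≠ 0 := by
    intro z
    rcases le_total ‖z‖ R with hz | hz
    · have e1 : s z = 0 := by
        have : ‖z‖ / R - 1 ≤ 0 := by
          rw [sub_nonpos, div_le_one hR]; exact hz
        simp [s, max_eq_left this]
      have e2 : c z = 1 := by simp [c, max_eq_left hz, hR.ne']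
      simp only [Ψ, e1, e2]
      simpa using hcon z hz
    · have hzpos : 0 < ‖z‖ := lt_of_lt_of_le hR hz
      have e2 : c z = R / ‖z‖ := by simp [c, max_eq_right hz]
      have hn : ‖c z • z‖ = R := by
        rw [norm_smul, e2, Real.norm_eq_abs, abs_of_pos (by positivity)]
        field_simp
      have e3 : s z • z = (s z * (‖z‖ / R)) • (c z • z) := by
        rw [smul_smul, e2]; congr 1; field_simp
      simp only [Ψ]
      rw [e3]
      apply hb _ hn
      · linarith [hs1 z]
      · have := hs0 z; positivity
      · have h1 : 1 ≤ ‖z‖ / R := by rw [le_div_iff₀ hR]; linarith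
        nlinarith [hs0 z, hs1 z]
  have hΨout : ∀ z, 2 * R ≤ ‖z‖ → Ψ z = z := by
    intro z hz
    have : s z = 1 := by
      have h1 : 1 ≤ ‖z‖ / R - 1 := by
        rw [le_sub_iff_add_le, le_div_iff₀ hR]; linarith
      simp only [s]
      rw [max_eq_right (by linarith), min_eq_left h1]
    simp [Ψ, this]
  obtain ⟨g, hg, hgd, hgS, -⟩ := hΨc.exists_contDiff_approx_and_eqOn (n := 1) (ε := fun z => ‖Ψ z‖)
    hΨc.norm (fun z => norm_pos_iff.mpr (hΨne z))
    (S := {z : E | 3 * R ≤ ‖z‖}) (U := {z : E | 2 * R < ‖z‖})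
    (isClosed_le continuous_const continuous_norm)
    ((isOpen_lt continuous_const continuous_norm).mem_nhdsSet.mpr (by
      intro z hz; simp only [mem_ofPred_eq] at hz ⊢; linarith))
    (contDiffOn_id.congr (fun z hz => hΨout z (le_of_lt hz)))
  have hgne : ∀ z, g z ≠ 0 := by
    intro z h0
    have := hgd z
    rw [h0, dist_zero_left] at this
    exact lt_irrefl _ this
  refine bo_no_retraction (fun z => (3 * R / ‖g z‖) • g z) ?_ (3 * R) (by positivity) ?_ ?_
  · have hg1 : ContDiff ℝ 1 g := hg
    exact (contDiff_const.div (hg1.norm ℝ hgne) (fun z => (norm_ne_zero_iff.mpr (hgne z)))).smul hg1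
  · intro z hz
    have : g z = z := by
      rw [hgS (show z ∈ {z : E | 3 * R ≤ ‖z‖} from hz.ge)]
      exact hΨout z (by rw [hz]; linarith)
    simp only [this, hz]
    rw [div_self (by positivity), one_smul]
  · intro z
    rw [norm_smul, Real.norm_eq_abs, abs_of_nonneg (by positivity)]
    have := norm_ne_zero_iff.mpr (hgne z)
    field_simp

section curves

variable {F : Type*} [NormedAddCommGroup F] [InnerProductSpace ℝ F]

/-- The `L²`-norm on `[0,1]`. -/
noncomputable def boNrm (f : ℝ → F) : ℝ := Real.sqrt (∫ t in (0:ℝ)..1, ‖f t‖ ^ 2)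

theorem boNrm_nonneg (f : ℝ → F) : 0 ≤ boNrm f := Real.sqrt_nonneg _

theorem boNrm_sq (f : ℝ → F) : boNrm f ^ 2 = ∫ t in (0:ℝ)..1, ‖f t‖ ^ 2 :=
  Real.sq_sqrt (intervalIntegral.integral_nonneg zero_le_one fun _ _ => by positivity)

theorem bo_cs_norm (f g : ℝ → F) (hf : Continuous f) (hg : Continuous g) :
    ∫ t in (0:ℝ)..1, ‖f t‖ * ‖g t‖ ≤ boNrm f * boNrm g := by
  set x := boNrm f with hx
  set y := boNrm g with hy
  set I := ∫ t in (0:ℝ)..1, ‖f t‖ * ‖g t‖ with hI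
  have key : ∀ a b : ℝ, 2 * (a * b) * I ≤ a ^ 2 * x ^ 2 + b ^ 2 * y ^ 2 := by
    intro a b
    have h0 : 0 ≤ ∫ t in (0:ℝ)..1, (a * ‖f t‖ - b * ‖g t‖) ^ 2 :=
      intervalIntegral.integral_nonneg zero_le_one fun _ _ => by positivity
    have e : ∀ t, (a * ‖f t‖ - b * ‖g t‖) ^ 2
      = a ^ 2 * ‖f t‖ ^ 2 + b ^ 2 * ‖g t‖ ^ 2 - 2 * (a * b) * (‖f t‖ * ‖g t‖) := fun t => by ring
    simp only [e] at h0
    rw [intervalIntegral.integral_sub, intervalIntegral.integral_add,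
      intervalIntegral.integral_const_mul, intervalIntegral.integral_const_mul,
      intervalIntegral.integral_const_mul, ← boNrm_sq, ← boNrm_sq] at h0
    · linarith
    all_goals apply Continuous.intervalIntegrable; fun_prop
  have hx0 : 0 ≤ x := boNrm_nonneg f
  have hy0 : 0 ≤ y := boNrm_nonneg g
  have hI0 : 0 ≤ I := intervalIntegral.integral_nonneg zero_le_one fun _ _ => by positivity
  have h1 := key y x
  rcases hx0.eq_or_lt with h | h
  · rcases hI0.eq_or_lt with hI1 | hI1
    · rw [← hI1]; positivity
    have h2 := key ((y ^ 2 + 1) / I) 1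
    have e : 2 * ((y ^ 2 + 1) / I * 1) * I = 2 * (y ^ 2 + 1) := by field_simp
    rw [e, ← h] at h2
    nlinarith [sq_nonneg y]
  rcases hy0.eq_or_lt with h' | h'
  · rcases hI0.eq_or_lt with hI1 | hI1
    · rw [← hI1]; positivity
    have h2 := key 1 ((x ^ 2 + 1) / I)
    have e : 2 * (1 * ((x ^ 2 + 1) / I)) * I = 2 * (x ^ 2 + 1) := by field_simp
    rw [e, ← h'] at h2
    nlinarith [sq_nonneg x]
  have hxy : 0 < x * y := mul_pos h h'
  nlinarith

theorem bo_cs (f g : ℝ → F) (hf : Continuous f) (hg : Continuous g) :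
    |∫ t in (0:ℝ)..1, inner ℝ (f t) (g t)| ≤ boNrm f * boNrm g := by
  refine le_trans ?_ (bo_cs_norm f g hf hg)
  rw [← Real.norm_eq_abs]
  refine intervalIntegral.norm_integral_le_of_norm_le zero_le_one ?_ ?_
  · exact Filter.Eventually.of_forall fun t _ => norm_inner_le_norm _ _
  · apply Continuous.intervalIntegrable; fun_prop

theorem boNrm_add_sq (f g : ℝ → F) (hf : Continuous f) (hg : Continuous g) :
    boNrm (fun t => f t + g t) ^ 2
      = boNrm f ^ 2 + 2 * (∫ t in (0:ℝ)..1, inner ℝ (f t) (g t)) + boNrm g ^ 2 := by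
  rw [boNrm_sq, boNrm_sq, boNrm_sq]
  simp only [norm_add_sq_real]
  rw [intervalIntegral.integral_add, intervalIntegral.integral_add,
      intervalIntegral.integral_const_mul]
  all_goals apply Continuous.intervalIntegrable; fun_prop

theorem boNrm_add_le (f g : ℝ → F) (hf : Continuous f) (hg : Continuous g) :
    boNrm (fun t => f t + g t) ≤ boNrm f + boNrm g := by
  have h1 := boNrm_add_sq f g hf hg
  have h2 := (abs_le.mp (bo_cs f g hf hg)).2
  have h3 := boNrm_nonneg f
  have h4 := boNrm_nonneg g
  apply le_of_sq_le_sq _ (by positivity)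
  nlinarith

theorem boNrm_smul (c : ℝ) (f : ℝ → F) :
    boNrm (fun t => c • f t) = |c| * boNrm f := by
  unfold boNrm
  simp only [norm_smul, mul_pow, Real.norm_eq_abs, sq_abs]
  rw [intervalIntegral.integral_const_mul, Real.sqrt_mul (sq_nonneg c), Real.sqrt_sq_eq_abs]

theorem bo_norm_integral_le (f : ℝ → F) (hf : Continuous f) (t : ℝ) (ht : t ∈ Icc (0:ℝ) 1) :
    ‖∫ s in (0:ℝ)..t, f s‖ ≤ boNrm f := by
  have h1 : ‖∫ s in (0:ℝ)..t, f s‖ ≤ ∫ s in (0:ℝ)..t, ‖f s‖ :=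
    intervalIntegral.norm_integral_le_integral_norm ht.1
  have h2 : ∫ s in (0:ℝ)..t, ‖f s‖ ≤ ∫ s in (0:ℝ)..1, ‖f s‖ := by
    apply intervalIntegral.integral_mono_interval le_rfl ht.1 ht.2
    · exact Filter.Eventually.of_forall fun _ => norm_nonneg _
    · exact hf.norm.intervalIntegrable _ _
  have h3 := bo_cs_norm (fun t => ‖f t‖) (fun _ => (1:ℝ)) hf.norm continuous_const
  have h4 : boNrm (fun _ : ℝ => (1:ℝ)) = 1 := by simp [boNrm]
  have h5 : boNrm (fun t => ‖f t‖) = boNrm f := by simp [boNrm]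
  rw [h4, h5] at h3
  simp only [norm_norm, norm_one, mul_one] at h3
  linarith

/-- The potential: bounded, with bounded and Lipschitz gradient. -/
structure BoPot (v : F → ℝ) (G : F → F) (C : ℝ) : Prop where
  one_le : 1 ≤ C
  grad : ∀ x, HasFDerivAt v (innerSL ℝ (G x)) x
  diff : Differentiable ℝ G
  vb : ∀ x, |v x| ≤ C
  Gb : ∀ x, ‖G x‖ ≤ C
  Db : ∀ x, ‖fderiv ℝ G x‖ ≤ C
  contD : Continuous (fderiv ℝ G)

variable {v : F → ℝ} {G : F → F} {C : ℝ}

theorem BoPot.contG (hp : BoPot v G C) : Continuous G := hp.diff.continuous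
theorem BoPot.contv (hp : BoPot v G C) : Continuous v :=
  continuous_iff_continuousAt.mpr fun x => (hp.grad x).continuousAt

theorem BoPot.lip (hp : BoPot v G C) (x y : F) : ‖G y - G x‖ ≤ C * ‖y - x‖ :=
  (convex_univ (𝕜 := ℝ) (E := F)).norm_image_sub_le_of_norm_fderiv_le
    (fun z _ => hp.diff z) (fun z _ => hp.Db z) (mem_univ x) (mem_univ y)

theorem BoPot.lower (hp : BoPot v G C) (x y : F) :
    v x + inner ℝ (G x) y - C * ‖y‖ ^ 2 ≤ v (x + y) := by
  have hC : 0 ≤ C := zero_le_one.trans hp.one_le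
  have h1 := (convex_closedBall x ‖y‖).norm_image_sub_le_of_norm_hasFDerivWithin_le
    (f := fun z => v z - innerSL ℝ (G x) z) (f' := fun z => innerSL ℝ (G z) - innerSL ℝ (G x))
    (C := C * ‖y‖) (x := x) (y := x + y)
    (fun z _ => ((hp.grad z).sub (innerSL ℝ (G x)).hasFDerivAt).hasFDerivWithinAt)
    (fun z hz => by
      rw [← map_sub, innerSL_apply_norm]
      refine (hp.lip x z).trans ?_
      apply mul_le_mul_of_nonneg_left _ hC
      rwa [Metric.mem_closedBall, dist_eq_norm] at hz)
    (by simp) (by simp [dist_eq_norm])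
  simp only [innerSL_apply_apply, inner_add_right, add_sub_cancel_left] at h1
  have h2 := (abs_le.mp h1).1
  nlinarith

noncomputable def boQ (a : F) (u : ℝ → F) (t : ℝ) : F := a + ∫ s in (0:ℝ)..t, u s
noncomputable def boA (u : ℝ → F) : ℝ := boNrm u ^ 2 / 2
noncomputable def boB (v : F → ℝ) (a : F) (u : ℝ → F) : ℝ := -∫ t in (0:ℝ)..1, v (boQ a u t)
noncomputable def boK (G : F → F) (a : F) (u : ℝ → F) (t : ℝ) : F :=
  ∫ s in t..1, G (boQ a u s)
noncomputable def boGu (v : F → ℝ) (G : F → F) (a : F) (u : ℝ → F) (t : ℝ) : F :=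
  boB v a u • u t - boA u • boK G a u t
noncomputable def boGa (G : F → F) (a : F) (u : ℝ → F) : F := -(boA u • boK G a u 0)
noncomputable def boR (v : F → ℝ) (G : F → F) (a : F) (u : ℝ → F) : ℝ :=
  boNrm (boGu v G a u) ^ 2 + ‖boGa G a u‖ ^ 2
noncomputable def boJ (v : F → ℝ) (a : F) (u : ℝ → F) : ℝ := boA u * boB v a u

theorem boA_nonneg (u : ℝ → F) : 0 ≤ boA u := by unfold boA; positivity

variable [CompleteSpace F]

theorem boQ_hasDeriv (a : F) (u : ℝ → F) (hu : Continuous u) (t : ℝ) :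
    HasDerivAt (boQ a u) (u t) t :=
  (intervalIntegral.integral_hasDerivAt_right (hu.intervalIntegrable _ _)
    hu.aestronglyMeasurable.stronglyMeasurableAtFilter hu.continuousAt).const_add a

theorem boQ_cont (a : F) (u : ℝ → F) (hu : Continuous u) : Continuous (boQ a u) :=
  continuous_iff_continuousAt.mpr fun t => (boQ_hasDeriv a u hu t).continuousAt

theorem boK_hasDeriv (hG : Continuous G) (a : F) (u : ℝ → F) (hu : Continuous u) (t : ℝ) :
    HasDerivAt (boK G a u) (-G (boQ a u t)) t := by
  have hc : Continuous fun s => G (boQ a u s) := hG.comp (boQ_cont a u hu)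
  exact intervalIntegral.integral_hasDerivAt_left (hc.intervalIntegrable _ _)
    hc.aestronglyMeasurable.stronglyMeasurableAtFilter hc.continuousAt

theorem boK_cont (hG : Continuous G) (a : F) (u : ℝ → F) (hu : Continuous u) :
    Continuous (boK G a u) :=
  continuous_iff_continuousAt.mpr fun t => (boK_hasDeriv hG a u hu t).continuousAt

theorem boK_one (G : F → F) (a : F) (u : ℝ → F) : boK G a u 1 = 0 := by simp [boK]

theorem boQ_add (a b : F) (u w : ℝ → F) (hu : Continuous u) (hw : Continuous w) (t : ℝ) :
    boQ (a + b) (fun t => u t + w t) t = boQ a u t + boQ b w t := by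
  unfold boQ
  rw [intervalIntegral.integral_add (hu.intervalIntegrable _ _) (hw.intervalIntegrable _ _)]
  abel

theorem bo_byparts (hG : Continuous G) (a b : F) (u w : ℝ → F) (hu : Continuous u)
    (hw : Continuous w) :
    ∫ t in (0:ℝ)..1, inner ℝ (G (boQ a u t)) (boQ b w t)
      = inner ℝ (boK G a u 0) b + ∫ t in (0:ℝ)..1, inner ℝ (boK G a u t) (w t) := by
  have hQ := boQ_cont a u hu
  have hQ' := boQ_cont b w hw
  have hK := boK_cont hG a u hu
  have hd : ∀ t ∈ uIcc (0:ℝ) 1, HasDerivAt (fun t => inner ℝ (boK G a u t) (boQ b w t))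
      (inner ℝ (boK G a u t) (w t) + inner ℝ (-G (boQ a u t)) (boQ b w t)) t := fun t _ =>
    (boK_hasDeriv hG a u hu t).inner ℝ (boQ_hasDeriv b w hw t)
  have h1 := intervalIntegral.integral_eq_sub_of_hasDerivAt hd (by
    apply Continuous.intervalIntegrable; fun_prop)
  rw [intervalIntegral.integral_add] at h1
  · simp only [inner_neg_left, intervalIntegral.integral_neg, boK_one, inner_zero_left] at h1
    have h2 : boQ b w 0 = b := by simp [boQ]
    rw [h2] at h1
    linarith
  all_goals apply Continuous.intervalIntegrable; fun_prop

theorem boB_abs (hp : BoPot v G C) (a : F) (u : ℝ → F) : |boB v a u| ≤ C := by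
  unfold boB
  rw [abs_neg, ← Real.norm_eq_abs]
  have := intervalIntegral.norm_integral_le_of_norm_le_const (a := (0:ℝ)) (b := 1) (C := C)
    (f := fun t => v (boQ a u t)) (fun t _ => hp.vb _)
  simpa using this

theorem bo_step (hp : BoPot v G C) (a δa : F) (u δu : ℝ → F) (hu : Continuous u)
    (hδ : Continuous δu) (D S : ℝ) (hS : 1 ≤ S) (hDS : D ≤ S) (huS : boNrm u ≤ S)
    (h1 : boNrm δu ≤ D) (h2 : ‖δa‖ ≤ D) :
    boJ v (a + δa) (fun t => u t + δu t) ≤ boJ v a u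
      + ((∫ t in (0:ℝ)..1, inner ℝ (boGu v G a u t) (δu t)) + inner ℝ (boGa G a u) δa)
      + 12 * C * S ^ 2 * D ^ 2 := by
  have hC := hp.one_le
  have hD : 0 ≤ D := (boNrm_nonneg _).trans h1
  have hQ := boQ_cont a u hu
  have hQ' := boQ_cont δa δu hδ
  have hK := boK_cont hp.contG a u hu
  have hv := hp.contv
  have hG := hp.contG
  set p := ∫ t in (0:ℝ)..1, inner ℝ (u t) (δu t) with hpdef
  set l := ∫ t in (0:ℝ)..1, inner ℝ (G (boQ a u t)) (boQ δa δu t) with hl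
  set d := boNrm δu with hd
  set A := boA u with hA
  set B := boB v a u with hB
  have hd0 : 0 ≤ d := boNrm_nonneg _
  have hA' : boA (fun t => u t + δu t) = A + p + d ^ 2 / 2 := by
    unfold boA at hA ⊢
    rw [boNrm_add_sq u δu hu hδ, hA]; ring
  have hdq : ∀ t ∈ Icc (0:ℝ) 1, ‖boQ δa δu t‖ ≤ 2 * D := by
    intro t ht
    have := bo_norm_integral_le δu hδ t ht
    unfold boQ
    refine (norm_add_le _ _).trans ?_
    linarith
  have hB' : boB v (a + δa) (fun t => u t + δu t) ≤ B - l + 4 * C * D ^ 2 := by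
    have h3 : ∫ t in (0:ℝ)..1, (v (boQ a u t) + inner ℝ (G (boQ a u t)) (boQ δa δu t)
        - 4 * C * D ^ 2) ≤ ∫ t in (0:ℝ)..1, v (boQ (a + δa) (fun t => u t + δu t) t) := by
      apply intervalIntegral.integral_mono_on zero_le_one
      · apply Continuous.intervalIntegrable; fun_prop
      · apply Continuous.intervalIntegrable
        exact hv.comp (boQ_cont _ _ (by fun_prop))
      · intro t ht
        rw [boQ_add a δa u δu hu hδ]
        have h4 := hp.lower (boQ a u t) (boQ δa δu t)
        have h5 := hdq t ht
        have h6 : ‖boQ δa δu t‖ ^ 2 ≤ (2 * D) ^ 2 := by gcongr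
        nlinarith
    rw [intervalIntegral.integral_sub, intervalIntegral.integral_add,
      intervalIntegral.integral_const] at h3
    · simp only [sub_zero, one_smul] at h3
      rw [hB]
      unfold boB
      linarith
    all_goals apply Continuous.intervalIntegrable; fun_prop
  have hpb : |p| ≤ S * D := by
    refine (bo_cs u δu hu hδ).trans ?_
    exact mul_le_mul huS h1 hd0 (by linarith)
  have hlb : |l| ≤ 2 * C * D := by
    have := intervalIntegral.norm_integral_le_of_norm_le_const (a := (0:ℝ)) (b := 1)
      (C := 2 * C * D) (f := fun t => inner ℝ (G (boQ a u t)) (boQ δa δu t)) (fun t ht => by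
        refine (norm_inner_le_norm _ _).trans ?_
        have h5 := hdq t (by
          rw [uIoc_of_le zero_le_one] at ht
          exact ⟨ht.1.le, ht.2⟩)
        calc _ ≤ C * (2 * D) := mul_le_mul (hp.Gb _) h5 (norm_nonneg _) (by linarith)
          _ = _ := by ring)
    simpa using this
  have hfirst : ((∫ t in (0:ℝ)..1, inner ℝ (boGu v G a u t) (δu t)) + inner ℝ (boGa G a u) δa)
      = B * p - A * l := by
    rw [hl, bo_byparts hG a δa u δu hu hδ]
    have e : ∀ t, inner ℝ (boGu v G a u t) (δu t)
      = B * inner ℝ (u t) (δu t) - A * inner ℝ (boK G a u t) (δu t) := by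
      intro t
      simp only [boGu, inner_sub_left, real_inner_smul_left, ← hA, ← hB]
    simp only [e]
    rw [intervalIntegral.integral_sub, intervalIntegral.integral_const_mul,
      intervalIntegral.integral_const_mul]
    · simp only [boGa, inner_neg_left, real_inner_smul_left, ← hA]
      rw [← hpdef]
      ring
    all_goals apply Continuous.intervalIntegrable; fun_prop
  have hA0 : 0 ≤ boA (fun t => u t + δu t) := boA_nonneg _
  have hAS : A ≤ S ^ 2 / 2 := by
    rw [hA]; unfold boA
    have := boNrm_nonneg u
    have : boNrm u ^ 2 ≤ S ^ 2 := by gcongr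
    linarith
  have hBb : |B| ≤ C := boB_abs hp a u
  rw [hfirst]
  unfold boJ
  rw [← hA, ← hB]
  have hmain := mul_le_mul_of_nonneg_left hB' hA0
  rw [hA'] at hmain ⊢
  refine hmain.trans ?_
  have hd2 : d ^ 2 ≤ D ^ 2 := by gcongr
  have t1 : d ^ 2 / 2 * (B - l) ≤ D ^ 2 / 2 * (3 * C * S) := by
    have hBl : B - l ≤ 3 * C * S := by
      have := (abs_le.mp hBb).2
      have := (abs_le.mp hlb).1
      have hCS : C ≤ C * S := by nlinarith
      have : C * D ≤ C * S := by gcongr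
      linarith
    have h0 : 0 ≤ 3 * C * S := by positivity
    calc d ^ 2 / 2 * (B - l) ≤ d ^ 2 / 2 * (3 * C * S) := by gcongr
      _ ≤ _ := by gcongr
  have t2 : -(p * l) ≤ (S * D) * (2 * C * D) := by
    have := mul_le_mul hpb hlb (abs_nonneg _) (by positivity)
    rw [← abs_mul] at this
    linarith [(abs_le.mp this).1]
  have t3 : 4 * C * D ^ 2 * (A + p + d ^ 2 / 2) ≤ 4 * C * D ^ 2 * (2 * S ^ 2) := by
    have : p ≤ S * S := ((abs_le.mp hpb).2).trans (by gcongr)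
    have : D ^ 2 ≤ S ^ 2 := by gcongr
    have : A + p + d ^ 2 / 2 ≤ 2 * S ^ 2 := by nlinarith
    gcongr
  have hSS : S ≤ S ^ 2 := by nlinarith
  have t4 : C * D ^ 2 * S ≤ C * D ^ 2 * S ^ 2 := by gcongr
  have hnn : 0 ≤ C * D ^ 2 * S ^ 2 := by positivity
  nlinarith

end curves

section est

variable {F : Type*} [NormedAddCommGroup F] [InnerProductSpace ℝ F] [CompleteSpace F]
variable {v : F → ℝ} {G : F → F} {C : ℝ}

set_option maxHeartbeats 1000000 in
theorem bo_est_energy (hp : BoPot v G C) (α β : ℝ) (hβ : 0 < β) :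
    ∃ C3 C5 : ℝ, 0 ≤ C3 ∧ 0 ≤ C5 ∧ ∀ (a : F) (u : ℝ → F) (ε lam : ℝ), Continuous u → 0 ≤ ε → ε ≤ 1 →
      β ≤ boJ v a u → boJ v a u ≤ α → 0 < lam → lam * boB v a u = boA u →
      boNrm (fun t => u t - lam • boK G a u t) ≤ ε * boNrm u →
      ‖lam • boK G a u 0‖ ≤ ε * boNrm u → 
      (∫ t in (0:ℝ)..1, ‖G (boQ a u t)‖ ^ 2) ≤ C3 * boB v a u ∧
      ∀ t ∈ Icc (0:ℝ) 1, |‖lam • boK G a u t‖ ^ 2 / 2 + lam * v (boQ a u t)| ≤ lam * ε * C5 := by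
  have hC := hp.one_le
  have hG := hp.contG
  have hv := hp.contv
  have hDG := hp.contD
  have hU0 : 0 < Real.sqrt (2 * β / C) := Real.sqrt_pos.mpr (by positivity)
  set U0 := Real.sqrt (2 * β / C) with hU0d
  set C3 := 2 * (C / U0 + 2 * C) with hC3
  have hC30 : 0 ≤ C3 := by positivity
  refine ⟨C3, Real.sqrt (2 * C3 * α) + 3 * C, hC30, by positivity, ?_⟩
  intro a u ε lam hu hε hε1 hJ hJα hlam hlB he1 he2
  have hQ := boQ_cont a u hu
  have hK := boK_cont hG a u hu
  set q := boQ a u with hq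
  set K := boK G a u with hKd
  set A := boA u with hA
  set B := boB v a u with hB
  set U := boNrm u with hU
  have hA0 : 0 ≤ A := boA_nonneg u
  have hUA : U ^ 2 = 2 * A := by rw [hA, hU]; unfold boA; ring
  have hAB : boJ v a u = A * B := rfl
  rw [hAB] at hJ hJα
  have hBC : B ≤ C := (abs_le.mp (boB_abs hp a u)).2
  have hBp : 0 < B := by
    by_contra hcon
    push Not at hcon
    nlinarith
  have hAp : β / C ≤ A := by
    rw [div_le_iff₀ (by linarith)]
    nlinarith
  have hUn : 0 ≤ U := boNrm_nonneg u
  have hUU0 : U0 ≤ U := by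
    rw [hU0d]
    apply Real.sqrt_le_iff.mpr ⟨hUn, ?_⟩
    rw [hUA, mul_div_assoc]; linarith
  have hUp : 0 < U := hU0.trans_le hUU0
  have hwc : Continuous fun t => lam • K t := by fun_prop
  have hec : Continuous fun t => u t - lam • K t := by fun_prop
  set W := boNrm (fun t => lam • K t) with hW
  have hWle : W ≤ U + ε * U := by
    have h1 := boNrm_add_le u (fun t => - (u t - lam • K t)) hu (by fun_prop)
    have h2 : boNrm (fun t => - (u t - lam • K t)) = boNrm (fun t => u t - lam • K t) := by
      simp only [boNrm, norm_neg]
    have h3 : (fun t => u t + - (u t - lam • K t)) = fun t => lam • K t := by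
      funext t; abel
    rw [h3, h2] at h1
    linarith
  have hWge : U - ε * U ≤ W := by
    have h1 := boNrm_add_le (fun t => lam • K t) (fun t => (u t - lam • K t)) hwc hec
    have h3 : (fun t => lam • K t + (u t - lam • K t)) = u := by
      funext t; abel
    rw [h3] at h1
    linarith
  have hW0 : 0 ≤ W := boNrm_nonneg _
  have hεU : ε * U ≤ U := by nlinarith
  -- virial
  have hvir : ∫ t in (0:ℝ)..1, ‖G (q t)‖ ^ 2 ≤ C3 * B := by
    have hd : ∀ t ∈ uIcc (0:ℝ) 1, HasDerivAt (fun t => inner ℝ (lam • K t) (G (q t)))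
        (inner ℝ (lam • K t) (fderiv ℝ G (q t) (u t))
          + inner ℝ (lam • (-G (q t))) (G (q t))) t := fun t _ =>
      ((boK_hasDeriv hG a u hu t).const_smul lam).inner ℝ
        ((hp.diff (q t)).hasFDerivAt.comp_hasDerivAt t (boQ_hasDeriv a u hu t))
    have hDc : Continuous fun t => fderiv ℝ G (q t) (u t) :=
      (hDG.comp hQ).clm_apply hu
    have h1 := intervalIntegral.integral_eq_sub_of_hasDerivAt hd (by
      apply Continuous.intervalIntegrable; fun_prop)
    rw [intervalIntegral.integral_add] at h1
    rotate_left
    · apply Continuous.intervalIntegrable; fun_prop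
    · apply Continuous.intervalIntegrable; fun_prop
    have e : ∀ t, inner ℝ (lam • (-G (q t))) (G (q t)) = -lam * ‖G (q t)‖ ^ 2 := by
      intro t
      rw [real_inner_smul_left, inner_neg_left, real_inner_self_eq_norm_sq]; ring
    simp only [e, intervalIntegral.integral_const_mul, hKd, boK_one, smul_zero,
      inner_zero_left] at h1
    rw [← hKd] at h1
    have h2 := bo_cs (fun t => lam • K t) (fun t => fderiv ℝ G (q t) (u t)) hwc hDc
    have h3 : boNrm (fun t => fderiv ℝ G (q t) (u t)) ≤ C * U := by
      apply Real.sqrt_le_iff.mpr ⟨by positivity, ?_⟩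
      rw [mul_pow, hU, boNrm_sq, ← intervalIntegral.integral_const_mul]
      apply intervalIntegral.integral_mono_on zero_le_one
      · apply Continuous.intervalIntegrable; fun_prop
      · apply Continuous.intervalIntegrable; fun_prop
      · intro t _
        rw [← mul_pow]
        gcongr
        exact (ContinuousLinearMap.le_opNorm _ _).trans (by gcongr; exact hp.Db _)
    have h4 := norm_inner_le_norm (𝕜 := ℝ) (lam • K 0) (G (q 0))
    have h5 : ‖lam • K 0‖ * ‖G (q 0)‖ ≤ U * C :=
      mul_le_mul (he2.trans hεU) (hp.Gb _) (norm_nonneg _) hUn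
    have h6 : W * boNrm (fun t => fderiv ℝ G (q t) (u t)) ≤ (2 * U) * (C * U) :=
      mul_le_mul (by linarith) h3 (boNrm_nonneg _) (by linarith)
    rw [Real.norm_eq_abs] at h4
    have h7 := (abs_le.mp h4).2
    have h8 := (abs_le.mp h2).2
    set X := ∫ t in (0:ℝ)..1, ‖G (q t)‖ ^ 2 with hX
    have h9 : lam * X ≤ U * C + 2 * U * (C * U) := by linarith
    have h10 : U * C + 2 * U * (C * U) ≤ lam * (C3 * B) := by
      have : lam * (C3 * B) = C3 * A := by rw [← hlB]; ring
      rw [this]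
      have h11 : A = U ^ 2 / 2 := by linarith
      rw [h11, hC3]
      have h12 : C / U ≤ C / U0 := by gcongr
      have h13 : U * C = U ^ 2 * (C / U) := by field_simp
      have h14 : U ^ 2 * (C / U) ≤ U ^ 2 * (C / U0) := by gcongr
      rw [h13]
      nlinarith
    exact le_of_mul_le_mul_left (h9.trans h10) hlam
  refine ⟨hvir, ?_⟩
  set En := fun t => ‖lam • K t‖ ^ 2 / 2 + lam * v (q t) with hEn
  have hEc : Continuous En := by fun_prop
  have hd : ∀ t, HasDerivAt En (lam * inner ℝ (G (q t)) (u t - lam • K t)) t := by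
    intro t
    have h1 := ((boK_hasDeriv hG a u hu t).const_smul lam)
    have h2 := (h1.norm_sq.div_const 2).add
      (((hp.grad (q t)).comp_hasDerivAt t (boQ_hasDeriv a u hu t)).const_mul lam)
    refine h2.congr_deriv ?_
    simp only [innerSL_apply_apply, inner_sub_right, Pi.smul_apply, ← hKd, ← hq,
      inner_smul_right, inner_smul_left, inner_neg_right, smul_neg]
    rw [real_inner_comm (K t) (G (q t))]
    simp
    ring
  have hdiff : ∀ s ∈ Icc (0:ℝ) 1, ∀ t ∈ Icc (0:ℝ) 1,
      |En t - En s| ≤ lam * ε * Real.sqrt (2 * C3 * α) := by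
    intro s hs t ht
    have hgc : Continuous fun t => lam * inner ℝ (G (q t)) (u t - lam • K t) := by fun_prop
    rw [← intervalIntegral.integral_eq_sub_of_hasDerivAt (fun t _ => hd t)
      (hgc.intervalIntegrable _ _), ← Real.norm_eq_abs]
    refine intervalIntegral.norm_integral_le_abs_integral_norm.trans ?_
    have hsub : uIoc s t ⊆ uIoc (0:ℝ) 1 := by
      rw [uIoc_of_le zero_le_one]
      intro x hx
      rw [mem_uIoc] at hx
      rcases hx with hx | hx
      · exact ⟨by linarith [hs.1], by linarith [ht.2]⟩
      · exact ⟨by linarith [ht.1], by linarith [hs.2]⟩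
    refine (intervalIntegral.abs_integral_mono_interval hsub
      (Filter.Eventually.of_forall fun x => norm_nonneg _)
      (hgc.norm.intervalIntegrable _ _)).trans ?_
    rw [abs_of_nonneg (intervalIntegral.integral_nonneg zero_le_one fun _ _ => norm_nonneg _)]
    have h1 : ∫ x in (0:ℝ)..1, ‖lam * inner ℝ (G (q x)) (u x - lam • K x)‖
        ≤ ∫ x in (0:ℝ)..1, lam * (‖G (q x)‖ * ‖u x - lam • K x‖) := by
      apply intervalIntegral.integral_mono_on zero_le_one
      · exact hgc.norm.intervalIntegrable _ _
      · apply Continuous.intervalIntegrable; fun_prop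
      · intro x _
        rw [norm_mul, Real.norm_of_nonneg hlam.le]
        gcongr
        exact norm_inner_le_norm _ _
    refine h1.trans ?_
    rw [intervalIntegral.integral_const_mul]
    have h2 := bo_cs_norm (fun x => G (q x)) (fun x => u x - lam • K x) (by fun_prop) hec
    have h3 : boNrm (fun x => G (q x)) * boNrm (fun x => u x - lam • K x)
        ≤ ε * Real.sqrt (2 * C3 * α) := by
      have h4 : boNrm (fun x => G (q x)) * U ≤ Real.sqrt (2 * C3 * α) := by
        apply Real.le_sqrt_of_sq_le
        rw [mul_pow, boNrm_sq, hUA]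
        calc _ ≤ (C3 * B) * (2 * A) := by gcongr
          _ = 2 * C3 * (A * B) := by ring
          _ ≤ _ := by gcongr
      calc _ ≤ boNrm (fun x => G (q x)) * (ε * U) := by gcongr; exact boNrm_nonneg _
        _ = ε * (boNrm (fun x => G (q x)) * U) := by ring
        _ ≤ _ := by gcongr
    calc _ ≤ lam * (ε * Real.sqrt (2 * C3 * α)) := by
          gcongr
          exact h2.trans h3
      _ = _ := by ring
  have hmean : |∫ t in (0:ℝ)..1, En t| ≤ lam * ε * (3 * C) := by
    have h1 : ∫ t in (0:ℝ)..1, En t = (W ^ 2 - U ^ 2) / 2 := by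
      rw [hEn, intervalIntegral.integral_add, intervalIntegral.integral_div,
        intervalIntegral.integral_const_mul, ← boNrm_sq, ← hW, hUA, ← hlB]
      · have : ∫ t in (0:ℝ)..1, v (q t) = -B := by rw [hB]; simp [boB]; rfl
        rw [this]; ring
      all_goals apply Continuous.intervalIntegrable; fun_prop
    rw [h1]
    have h2 : lam * ε * (3 * C) ≥ ε * (3 * A) := by
      rw [← hlB]
      have : lam * ε * B ≤ lam * ε * C := by gcongr
      nlinarith
    have h3 : ε * (3 * A) = 3 / 2 * (ε * U) * U := by
      have : A = U ^ 2 / 2 := by linarith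
      rw [this]; ring
    have hεU0 : 0 ≤ ε * U := by positivity
    rw [abs_le]
    constructor <;> nlinarith
  intro t ht
  have h1 : En t = (∫ s in (0:ℝ)..1, En s) + ∫ s in (0:ℝ)..1, (En t - En s) := by
    rw [intervalIntegral.integral_sub]
    · simp
    all_goals apply Continuous.intervalIntegrable; fun_prop
  have h2 : |∫ s in (0:ℝ)..1, (En t - En s)| ≤ lam * ε * Real.sqrt (2 * C3 * α) := by
    have := intervalIntegral.norm_integral_le_of_norm_le_const (a := (0:ℝ)) (b := 1)
      (C := lam * ε * Real.sqrt (2 * C3 * α)) (f := fun s => En t - En s) (fun s hs => by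
        rw [uIoc_of_le zero_le_one] at hs
        exact hdiff s ⟨hs.1.le, hs.2⟩ t ht)
    simpa using this
  have h3 : |En t| ≤ |∫ s in (0:ℝ)..1, En s| + |∫ s in (0:ℝ)..1, (En t - En s)| := by
    conv_lhs => rw [h1]
    exact abs_add_le _ _
  calc |En t| ≤ _ := h3
    _ ≤ lam * ε * (3 * C) + lam * ε * Real.sqrt (2 * C3 * α) := add_le_add hmean h2
    _ = _ := by ring

end est

section lowB

variable {F : Type*} [NormedAddCommGroup F] [InnerProductSpace ℝ F] [CompleteSpace F]
variable {v : F → ℝ} {G : F → F} {C : ℝ}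

theorem bo_est_B (hp : BoPot v G C) (κ c : ℝ) (hκ : 0 < κ) (hc : 0 < c)
    (hreg : ∀ x, |v x| ≤ κ → c ≤ ‖G x‖) (C3 : ℝ) (hC3 : 0 ≤ C3) (a : F) (u : ℝ → F)
    (hu : Continuous u) (h1 : (∫ t in (0:ℝ)..1, ‖G (boQ a u t)‖ ^ 2) ≤ C3 * boB v a u)
    (h2 : ∀ t ∈ Icc (0:ℝ) 1, v (boQ a u t) ≤ κ) :
    κ / (1 + 2 * κ * C3 / c ^ 2) ≤ boB v a u := by
  have hQ := boQ_cont a u hu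
  have hG := hp.contG
  have hv := hp.contv
  rw [div_le_iff₀ (by positivity)]
  have h3 : ∫ t in (0:ℝ)..1, v (boQ a u t)
      ≤ ∫ t in (0:ℝ)..1, (-κ + 2 * κ / c ^ 2 * ‖G (boQ a u t)‖ ^ 2) := by
    apply intervalIntegral.integral_mono_on zero_le_one
    · apply Continuous.intervalIntegrable; fun_prop
    · apply Continuous.intervalIntegrable; fun_prop
    · intro t ht
      rcases lt_or_ge (v (boQ a u t)) (-κ) with h | h
      · have : 0 ≤ 2 * κ / c ^ 2 * ‖G (boQ a u t)‖ ^ 2 := by positivity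
        linarith
      · have h4 := hreg _ (abs_le.mpr ⟨h, h2 t ht⟩)
        have h5 : 2 * κ / c ^ 2 * c ^ 2 ≤ 2 * κ / c ^ 2 * ‖G (boQ a u t)‖ ^ 2 := by gcongr
        have h6 : 2 * κ / c ^ 2 * c ^ 2 = 2 * κ := by field_simp
        linarith [h2 t ht]
  rw [intervalIntegral.integral_add, intervalIntegral.integral_const_mul] at h3
  · simp only [intervalIntegral.integral_const, sub_zero, one_smul] at h3
    have h7 : 2 * κ / c ^ 2 * (∫ t in (0:ℝ)..1, ‖G (boQ a u t)‖ ^ 2)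
      ≤ 2 * κ / c ^ 2 * (C3 * boB v a u) := by gcongr
    have h8 : boB v a u = -∫ t in (0:ℝ)..1, v (boQ a u t) := rfl
    have h9 : boB v a u * (1 + 2 * κ * C3 / c ^ 2)
      = boB v a u + 2 * κ / c ^ 2 * (C3 * boB v a u) := by ring
    linarith
  all_goals apply Continuous.intervalIntegrable; fun_prop

/-- The brake orbit, in rescaled time. -/
def BoOrbit (v : F → ℝ) (G : F → F) : Prop :=
  ∃ lam : ℝ, 0 < lam ∧ ∃ q w : ℝ → F,
    (∀ t ∈ Icc (0:ℝ) 1, HasDerivAt q (w t) t) ∧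
    (∀ t ∈ Icc (0:ℝ) 1, HasDerivAt w (-(lam • G (q t))) t) ∧
    w 0 = 0 ∧ w 1 = 0 ∧ (∀ t ∈ Icc (0:ℝ) 1, v (q t) ≤ 0) ∧ v (q 0) = 0 ∧
    ∃ t ∈ Icc (0:ℝ) 1, w t ≠ 0

open Filter Topology in
theorem bo_limit [FiniteDimensional ℝ F] (hp : BoPot v G C)
    (hreg : ∀ x, v x = 0 → G x ≠ 0) (lo Lam M : ℝ) (hlo : 0 < lo)
    (a : ℕ → F) (u : ℕ → ℝ → F) (lam ε : ℕ → ℝ) (hu : ∀ k, Continuous (u k))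
    (hl1 : ∀ k, lo ≤ lam k) (hl2 : ∀ k, lam k ≤ Lam) (ha : ∀ k, ‖a k‖ ≤ M)
    (hε : Tendsto ε atTop (𝓝 0))
    (h1 : ∀ k, boNrm (fun t => u k t - lam k • boK G (a k) (u k) t) ≤ ε k)
    (h2 : ∀ k, ‖lam k • boK G (a k) (u k) 0‖ ≤ ε k)
    (h3 : ∀ k, ∀ t ∈ Icc (0:ℝ) 1, |‖lam k • boK G (a k) (u k) t‖ ^ 2 / 2
      + lam k * v (boQ (a k) (u k) t)| ≤ ε k) : BoOrbit v G := by
  have hC := hp.one_le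
  have hG := hp.contG
  have hv := hp.contv
  have hLam : 0 < Lam := hlo.trans_le ((hl1 0).trans (hl2 0))
  have hl0 : ∀ k, 0 < lam k := fun k => hlo.trans_le (hl1 k)
  have hKc : ∀ k, Continuous (boK G (a k) (u k)) := fun k => boK_cont hG _ _ (hu k)
  have hLip : ∀ k s t, ‖lam k • boK G (a k) (u k) s - lam k • boK G (a k) (u k) t‖
      ≤ Lam * C * ‖s - t‖ := by
    intro k s t
    have := (convex_univ (𝕜 := ℝ) (E := ℝ)).norm_image_sub_le_of_norm_hasDerivWithin_le
      (f := fun t => lam k • boK G (a k) (u k) t)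
      (f' := fun t => lam k • (-G (boQ (a k) (u k) t))) (C := Lam * C)
      (fun t _ => ((boK_hasDeriv hG (a k) (u k) (hu k) t).const_smul (lam k)).hasDerivWithinAt)
      (fun t _ => by
        rw [norm_smul, norm_neg, Real.norm_of_nonneg (hl0 k).le]
        exact mul_le_mul (hl2 k) (hp.Gb _) (norm_nonneg _) hLam.le) (mem_univ t) (mem_univ s)
    exact this
  let f : ℕ → BoundedContinuousFunction (Icc (0:ℝ) 1) F := fun k =>
    BoundedContinuousFunction.mkOfCompact
      ⟨fun t => lam k • boK G (a k) (u k) t, by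
        have := hKc k
        fun_prop⟩
  have hf : ∀ k t, f k t = lam k • boK G (a k) (u k) t := fun k t => rfl
  have hcomp : IsCompact (closure (range f)) := by
    refine BoundedContinuousFunction.arzela_ascoli (Metric.closedBall 0 (Lam * C))
      (isCompact_closedBall _ _) (range f) ?_ ?_
    · rintro _ t ⟨k, rfl⟩
      rw [mem_closedBall_zero_iff, hf]
      have := hLip k t 1
      rw [boK_one, smul_zero, sub_zero] at this
      refine this.trans ?_
      have h5 : ‖(t:ℝ) - 1‖ ≤ 1 := by
        rw [Real.norm_eq_abs, abs_le]; constructor <;> linarith [t.2.1, t.2.2]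
      have : 0 ≤ Lam * C := by positivity
      nlinarith
    · have hL : ∀ g : range f, LipschitzWith (Real.toNNReal (Lam * C)) (fun t => g.1 t) := by
        rintro ⟨_, k, rfl⟩
        refine LipschitzWith.of_dist_le_mul fun s t => ?_
        rw [Real.coe_toNNReal _ (by positivity), dist_eq_norm]
        exact hLip k s t
      exact (LipschitzWith.uniformEquicontinuous _ _ hL).equicontinuous
  have hcomp3 := (isCompact_Icc (a := lo) (b := Lam)).prod
    ((isCompact_closedBall (0:F) M).prod hcomp)
  obtain ⟨⟨l, a', f'⟩, hmem, φ, hφ, hlim⟩ := hcomp3.tendsto_subseq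
    (x := fun k => (lam k, a k, f k)) (fun k => ⟨⟨hl1 k, hl2 k⟩,
      mem_closedBall_zero_iff.mpr (ha k), subset_closure (mem_range_self k)⟩)
  have hlpos : 0 < l := hlo.trans_le hmem.1.1
  have lim_l : Tendsto (fun k => lam (φ k)) atTop (𝓝 l) := (continuous_fst.tendsto _).comp hlim
  have lim_a : Tendsto (fun k => a (φ k)) atTop (𝓝 a') :=
    ((continuous_fst.comp continuous_snd).tendsto _).comp hlim
  have lim_f : Tendsto (fun k => f (φ k)) atTop (𝓝 f') :=
    ((continuous_snd.comp continuous_snd).tendsto _).comp hlim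
  have lim_e : Tendsto (fun k => ε (φ k)) atTop (𝓝 0) := hε.comp hφ.tendsto_atTop
  let W : ℝ → F := fun t => f' (projIcc 0 1 zero_le_one t)
  have hW : Continuous W := f'.continuous.comp continuous_projIcc
  have hWI : ∀ t (ht : t ∈ Icc (0:ℝ) 1), W t = f' ⟨t, ht⟩ := fun t ht => by
    simp only [W, projIcc_of_mem zero_le_one ht]
  have lim_w : ∀ t ∈ Icc (0:ℝ) 1, Tendsto (fun k => lam (φ k) • boK G (a (φ k)) (u (φ k)) t)
      atTop (𝓝 (W t)) := by
    intro t ht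
    rw [hWI t ht]
    exact ((continuous_eval_const (⟨t, ht⟩ : Icc (0:ℝ) 1)).tendsto
      _).comp lim_f
  have lim_q : ∀ t ∈ Icc (0:ℝ) 1, Tendsto (fun k => boQ (a (φ k)) (u (φ k)) t)
      atTop (𝓝 (boQ a' W t)) := by
    intro t ht
    rw [tendsto_iff_norm_sub_tendsto_zero]
    have hb : ∀ k, ‖boQ (a (φ k)) (u (φ k)) t - boQ a' W t‖
        ≤ ‖a (φ k) - a'‖ + ε (φ k) + ‖f (φ k) - f'‖ := by
      intro k
      set j := φ k with hj
      have hKj := hKc j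
      have huj := hu j
      have e : boQ (a j) (u j) t - boQ a' W t = (a j - a')
          + (∫ s in (0:ℝ)..t, (u j s - lam j • boK G (a j) (u j) s))
          + ∫ s in (0:ℝ)..t, (lam j • boK G (a j) (u j) s - W s) := by
        rw [intervalIntegral.integral_sub, intervalIntegral.integral_sub]
        · unfold boQ; abel
        all_goals apply Continuous.intervalIntegrable; fun_prop
      rw [e]
      refine (norm_add₃_le).trans ?_
      have e1 := bo_norm_integral_le (fun s => u j s - lam j • boK G (a j) (u j) s)
        (by fun_prop) t ht
      have e2 : ‖∫ s in (0:ℝ)..t, (lam j • boK G (a j) (u j) s - W s)‖ ≤ ‖f j - f'‖ := by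
        have := intervalIntegral.norm_integral_le_of_norm_le_const (a := (0:ℝ)) (b := t)
          (C := ‖f j - f'‖) (f := fun s => lam j • boK G (a j) (u j) s - W s) (fun s hs => by
            rw [uIoc_of_le ht.1] at hs
            have hs' : s ∈ Icc (0:ℝ) 1 := ⟨hs.1.le, hs.2.trans ht.2⟩
            rw [hWI s hs']
            exact (f j - f').norm_coe_le_norm ⟨s, hs'⟩)
        refine this.trans ?_
        rw [sub_zero, abs_of_nonneg ht.1]
        exact mul_le_of_le_one_right (norm_nonneg _) ht.2
      linarith [h1 j]
    refine squeeze_zero (fun _ => norm_nonneg _) hb ?_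
    have t1 := tendsto_iff_norm_sub_tendsto_zero.mp lim_a
    have t2 := tendsto_iff_norm_sub_tendsto_zero.mp lim_f
    simpa using (t1.add lim_e).add t2
  have lim_K : ∀ t ∈ Icc (0:ℝ) 1, Tendsto (fun k => boK G (a (φ k)) (u (φ k)) t)
      atTop (𝓝 (boK G a' W t)) := by
    intro t ht
    refine intervalIntegral.tendsto_integral_filter_of_dominated_convergence (fun _ => C) ?_ ?_ ?_ ?_
    · refine Eventually.of_forall fun k => ?_
      exact (hG.comp (boQ_cont _ _ (hu (φ k)))).aestronglyMeasurable
    · exact Eventually.of_forall fun k => Eventually.of_forall fun s _ => hp.Gb _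
    · exact intervalIntegrable_const
    · refine Eventually.of_forall fun s hs => ?_
      rw [uIoc_of_le ht.2] at hs
      exact (hG.tendsto _).comp (lim_q s ⟨ht.1.trans hs.1.le, hs.2⟩)
  have hWK : ∀ t ∈ Icc (0:ℝ) 1, W t = l • boK G a' W t := fun t ht =>
    tendsto_nhds_unique (lim_w t ht) (lim_l.smul (lim_K t ht))
  have hE : ∀ t ∈ Icc (0:ℝ) 1, ‖W t‖ ^ 2 / 2 + l * v (boQ a' W t) = 0 := by
    intro t ht
    have t1 : Tendsto (fun k => ‖lam (φ k) • boK G (a (φ k)) (u (φ k)) t‖ ^ 2 / 2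
      + lam (φ k) * v (boQ (a (φ k)) (u (φ k)) t)) atTop
      (𝓝 (‖W t‖ ^ 2 / 2 + l * v (boQ a' W t))) :=
      (((lim_w t ht).norm.pow 2).div_const 2).add
        (lim_l.mul ((hv.tendsto _).comp (lim_q t ht)))
    refine tendsto_nhds_unique t1 ?_
    exact squeeze_zero_norm (fun k => h3 (φ k) t ht) lim_e
  have m0 : (0:ℝ) ∈ Icc (0:ℝ) 1 := ⟨le_rfl, zero_le_one⟩
  have m1 : (1:ℝ) ∈ Icc (0:ℝ) 1 := ⟨zero_le_one, le_rfl⟩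
  have hW0 : W 0 = 0 := by
    refine tendsto_nhds_unique (lim_w 0 m0) ?_
    exact squeeze_zero_norm (fun k => h2 (φ k)) lim_e
  have hK' := boK_cont hG a' W hW
  have hder : ∀ t, HasDerivAt (fun t => l • boK G a' W t) (-(l • G (boQ a' W t))) t := by
    intro t
    have := (boK_hasDeriv hG a' W hW t).const_smul l
    rwa [smul_neg] at this
  refine ⟨l, hlpos, boQ a' W, fun t => l • boK G a' W t, ?_, fun t _ => hder t, ?_, ?_, ?_, ?_, ?_⟩
  · intro t ht
    have := boQ_hasDeriv a' W hW t
    rwa [hWK t ht] at this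
  · exact (hWK 0 m0).symm.trans hW0
  · simp [boK_one]
  · intro t ht
    have := hE t ht
    by_contra hcon
    push Not at hcon
    have : 0 < l * v (boQ a' W t) := mul_pos hlpos hcon
    linarith [sq_nonneg ‖W t‖]
  · have := hE 0 m0
    rw [hW0] at this
    simpa [hlpos.ne'] using this
  · by_contra hcon
    push Not at hcon
    have mh : (1/2:ℝ) ∈ Icc (0:ℝ) 1 := by constructor <;> norm_num
    have e1 : (fun t => l • boK G a' W t) =ᶠ[𝓝 (1/2:ℝ)] fun _ => 0 := by
      filter_upwards [Icc_mem_nhds (a := (0:ℝ)) (b := 1) (x := 1/2) (by norm_num) (by norm_num)]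
        with t ht
      exact hcon t ht
    have e2 := (hder (1/2)).unique ((hasDerivAt_const (1/2:ℝ) (0:F)).congr_of_eventuallyEq e1)
    have e3 : G (boQ a' W (1/2)) = 0 := by
      simpa [hlpos.ne'] using e2
    have e4 := hE _ mh
    rw [hWK _ mh, hcon _ mh] at e4
    refine hreg _ ?_ e3
    simpa [hlpos.ne'] using e4

end lowB

section ps

variable {F : Type*} [NormedAddCommGroup F] [InnerProductSpace ℝ F] [FiniteDimensional ℝ F]
variable {v : F → ℝ} {G : F → F} {C : ℝ}

theorem bo_small [CompleteSpace F] (hp : BoPot v G C) (a : F) (u : ℝ → F) (hu : Continuous u) (β δ : ℝ) (hβ : 0 < β)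
    (hδ : 0 < δ) (hJ : β ≤ boJ v a u) (hR : boA u * boR v G a u < (β * δ) ^ 2) :
    0 < boA u ∧ 0 < boB v a u ∧
    boNrm (fun t => u t - (boA u / boB v a u) • boK G a u t) ≤ δ * boNrm u ∧
    ‖(boA u / boB v a u) • boK G a u 0‖ ≤ δ * boNrm u := by
  have hA0 := boA_nonneg u
  have hBp : 0 < boB v a u := by
    by_contra hcon
    push Not at hcon
    unfold boJ at hJ
    nlinarith
  have hAp : 0 < boA u := by
    by_contra hcon
    push Not at hcon
    unfold boJ at hJ
    nlinarith
  refine ⟨hAp, hBp, ?_⟩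
  set A := boA u with hA
  set B := boB v a u with hB
  set U := boNrm u with hU
  have hU0 : 0 ≤ U := boNrm_nonneg u
  have hUA : U ^ 2 = 2 * A := by rw [hA, hU]; unfold boA; ring
  have e1 : boNrm (boGu v G a u) = B * boNrm (fun t => u t - (A / B) • boK G a u t) := by
    have : boGu v G a u = fun t => B • (u t - (A / B) • boK G a u t) := by
      funext t
      unfold boGu
      rw [smul_sub, smul_smul, mul_div_cancel₀ _ hBp.ne']
    rw [this, boNrm_smul, abs_of_pos hBp]
  have e2 : ‖boGa G a u‖ = B * ‖(A / B) • boK G a u 0‖ := by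
    have : boGa G a u = -(B • ((A / B) • boK G a u 0)) := by
      unfold boGa
      rw [smul_smul, mul_div_cancel₀ _ hBp.ne']
    rw [this, norm_neg, norm_smul, Real.norm_of_nonneg hBp.le]
  unfold boR at hR
  rw [e1, e2] at hR
  set X := boNrm (fun t => u t - (A / B) • boK G a u t)
  set Y := ‖(A / B) • boK G a u 0‖
  have hJ' : β ≤ A * B := hJ
  have h1 : (β * δ) ^ 2 ≤ (A * B * δ) ^ 2 := by gcongr
  have h2 : A * B ^ 2 * (X ^ 2 + Y ^ 2) < A * B ^ 2 * (A * δ ^ 2) := by nlinarith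
  have h3 : X ^ 2 + Y ^ 2 < A * δ ^ 2 := lt_of_mul_lt_mul_left h2 (by positivity)
  have h4 : X ^ 2 + Y ^ 2 ≤ (δ * U) ^ 2 := by
    rw [mul_pow, hUA]
    nlinarith [mul_pos hAp (pow_pos hδ 2)]
  constructor
  · apply (sq_le_sq₀ (by first | exact boNrm_nonneg _ | exact norm_nonneg _) (by positivity)).mp; refine id ?_
    nlinarith [sq_nonneg Y]
  · apply (sq_le_sq₀ (by first | exact boNrm_nonneg _ | exact norm_nonneg _) (by positivity)).mp; refine id ?_
    nlinarith [sq_nonneg X]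

open Filter Topology in
theorem bo_ps (hp : BoPot v G C) (κ c ρ : ℝ) (hκ : 0 < κ) (hc : 0 < c)
    (hreg : ∀ x, |v x| ≤ κ → c ≤ ‖G x‖) (hρ : ∀ x, v x ≤ 0 → ‖x‖ ≤ ρ)
    (α β : ℝ) (hβ : 0 < β) (hno : ¬ BoOrbit v G) :
    ∃ ε : ℝ, 0 < ε ∧ ∀ (a : F) (u : ℝ → F), Continuous u → β ≤ boJ v a u → boJ v a u ≤ α →
      ε ≤ boA u * boR v G a u := by
  have : CompleteSpace F := FiniteDimensional.complete ℝ F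
  have hC := hp.one_le
  by_contra hcon
  push Not at hcon
  obtain ⟨C3, C5, hC3, hC5, hest⟩ := bo_est_energy hp α β hβ
  set δ0 := min 1 (κ / (C5 + 1)) with hδ0
  have hδ0p : 0 < δ0 := lt_min one_pos (by positivity)
  let δ : ℕ → ℝ := fun k => δ0 / (k + 1)
  have hδp : ∀ k, 0 < δ k := fun k => by positivity
  have hδle : ∀ k, δ k ≤ δ0 := fun k => div_le_self hδ0p.le (by
    have : (0:ℝ) ≤ k := Nat.cast_nonneg k
    linarith)
  have hδ1 : ∀ k, δ k ≤ 1 := fun k => (hδle k).trans (min_le_left _ _)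
  have hδκ : ∀ k, δ k * C5 ≤ κ := fun k => by
    have h1 : δ k ≤ κ / (C5 + 1) := (hδle k).trans (min_le_right _ _)
    rw [le_div_iff₀ (by positivity)] at h1
    nlinarith [hδp k]
  choose a u hu hJ1 hJ2 hR using fun k : ℕ => hcon ((β * δ k) ^ 2) (by have := hδp k; positivity)
  have hs := fun k => bo_small hp (a k) (u k) (hu k) β (δ k) hβ (hδp k) (hJ1 k) (hR k)
  set lam : ℕ → ℝ := fun k => boA (u k) / boB v (a k) (u k) with hlam
  have hlamp : ∀ k, 0 < lam k := fun k => div_pos (hs k).1 (hs k).2.1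
  have hlB : ∀ k, lam k * boB v (a k) (u k) = boA (u k) := fun k =>
    div_mul_cancel₀ _ (hs k).2.1.ne'
  have he := fun k => hest (a k) (u k) (δ k) (lam k) (hu k) (hδp k).le (hδ1 k) (hJ1 k) (hJ2 k)
    (hlamp k) (hlB k) (hs k).2.2.1 (hs k).2.2.2
  set b0 := κ / (1 + 2 * κ * C3 / c ^ 2) with hb0
  have hb0p : 0 < b0 := by positivity
  have hB1 : ∀ k, b0 ≤ boB v (a k) (u k) := by
    intro k
    refine bo_est_B hp κ c hκ hc hreg C3 hC3 (a k) (u k) (hu k) (he k).1 ?_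
    intro t ht
    have h1 := (abs_le.mp ((he k).2 t ht)).2
    have h2 : lam k * v (boQ (a k) (u k) t) ≤ lam k * (δ k * C5) := by
      have : 0 ≤ ‖lam k • boK G (a k) (u k) t‖ ^ 2 / 2 := by positivity
      nlinarith
    exact (le_of_mul_le_mul_left h2 (hlamp k)).trans (hδκ k)
  have hB2 : ∀ k, boB v (a k) (u k) ≤ C := fun k => (abs_le.mp (boB_abs hp _ _)).2
  have hA1 : ∀ k, boA (u k) ≤ α / b0 := by
    intro k
    rw [le_div_iff₀ hb0p]
    refine le_trans ?_ (hJ2 k)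
    exact mul_le_mul_of_nonneg_left (hB1 k) (hs k).1.le
  have hA2 : ∀ k, β / C ≤ boA (u k) := by
    intro k
    rw [div_le_iff₀ (by linarith)]
    refine (hJ1 k).trans ?_
    exact mul_le_mul_of_nonneg_left (hB2 k) (hs k).1.le
  have hl1 : ∀ k, β / C / C ≤ lam k := fun k =>
    div_le_div₀ (hs k).1.le (hA2 k) (hs k).2.1 (hB2 k)
  have hl2 : ∀ k, lam k ≤ α / b0 / b0 := fun k =>
    div_le_div₀ ((hs k).1.le.trans (hA1 k)) (hA1 k) hb0p (hB1 k)
  set M := Real.sqrt (2 * (α / b0)) with hM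
  have hU : ∀ k, boNrm (u k) ≤ M := by
    intro k
    apply Real.le_sqrt_of_sq_le
    have : boNrm (u k) ^ 2 = 2 * boA (u k) := by unfold boA; ring
    rw [this]
    linarith [hA1 k]
  have hM0 : 0 ≤ M := Real.sqrt_nonneg _
  have ha : ∀ k, ‖a k‖ ≤ ρ + M := by
    intro k
    have : ∃ t ∈ Icc (0:ℝ) 1, v (boQ (a k) (u k) t) ≤ 0 := by
      by_contra hcon
      push Not at hcon
      have h1 : 0 ≤ ∫ t in (0:ℝ)..1, v (boQ (a k) (u k) t) :=
        intervalIntegral.integral_nonneg zero_le_one fun t ht => (hcon t ht).le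
      have h2 := (hs k).2.1
      unfold boB at h2
      linarith
    obtain ⟨t, ht, hvt⟩ := this
    have h1 := hρ _ hvt
    have h2 := (bo_norm_integral_le (u k) (hu k) t ht).trans (hU k)
    have h3 : a k = boQ (a k) (u k) t - ∫ s in (0:ℝ)..t, u k s := by unfold boQ; abel
    rw [h3]
    exact (norm_sub_le _ _).trans (add_le_add h1 h2)
  set Lam := α / b0 / b0
  refine hno (bo_limit hp (fun x hx hGx => ?_) (β / C / C) Lam (ρ + M) (by positivity)
    a u lam (fun k => δ k * (M + Lam * C5)) hu hl1 hl2 ha ?_ ?_ ?_ ?_)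
  · have := hreg x (by rw [hx, abs_zero]; exact hκ.le)
    rw [hGx, norm_zero] at this
    linarith
  · have h1 : Tendsto δ atTop (𝓝 0) := by
      have := (tendsto_one_div_add_atTop_nhds_zero_nat (𝕜 := ℝ)).const_mul δ0
      simp only [mul_zero] at this
      refine this.congr fun k => ?_
      simp only [δ]; ring
    simpa using h1.mul_const (M + Lam * C5)
  all_goals
    intro k
    have hLp : 0 < Lam := (hlamp k).trans_le (hl2 k)
    have hd := hδp k
  · refine (hs k).2.2.1.trans ?_
    refine mul_le_mul_of_nonneg_left ((hU k).trans ?_) hd.le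
    have : 0 ≤ Lam * C5 := by positivity
    linarith
  · refine (hs k).2.2.2.trans ?_
    refine mul_le_mul_of_nonneg_left ((hU k).trans ?_) hd.le
    have : 0 ≤ Lam * C5 := by positivity
    linarith
  · intro t ht
    refine ((he k).2 t ht).trans ?_
    calc lam k * δ k * C5 ≤ Lam * δ k * C5 := by gcongr; exact hl2 k
      _ = δ k * (0 + Lam * C5) := by ring
      _ ≤ _ := by gcongr

end ps

section deform

variable {F : Type*} [NormedAddCommGroup F] [InnerProductSpace ℝ F] [CompleteSpace F]
variable {v : F → ℝ} {G : F → F} {C : ℝ}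

noncomputable def boTh (v : F → ℝ) (β : ℝ) (a : F) (u : ℝ → F) : ℝ :=
  min 1 (max 0 (boJ v a u - β / 2))

noncomputable def boKap (v : F → ℝ) (G : F → F) (β s : ℝ) (a : F) (u : ℝ → F) : ℝ :=
  s * boTh v β a u * boA u / (1 + boA u * boR v G a u)

noncomputable def boStA (v : F → ℝ) (G : F → F) (β s : ℝ) (a : F) (u : ℝ → F) : F :=
  a + (-boKap v G β s a u) • boGa G a u

noncomputable def boStU (v : F → ℝ) (G : F → F) (β s : ℝ) (a : F) (u : ℝ → F) (t : ℝ) : F :=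
  u t + (-boKap v G β s a u) • boGu v G a u t

theorem boR_nonneg (v : F → ℝ) (G : F → F) (a : F) (u : ℝ → F) : 0 ≤ boR v G a u := by
  unfold boR; positivity

theorem boGu_cont (hp : BoPot v G C) (a : F) (u : ℝ → F) (hu : Continuous u) :
    Continuous (boGu v G a u) := by
  have := boK_cont hp.contG a u hu
  unfold boGu
  fun_prop

theorem bo_dec (hp : BoPot v G C) (β s S : ℝ) (hs : 0 ≤ s) (hs1 : s ≤ 1) (hS : 1 ≤ S)
    (a : F) (u : ℝ → F) (hu : Continuous u) (huS : boNrm u ≤ S) :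
    boJ v (boStA v G β s a u) (boStU v G β s a u) ≤ boJ v a u
      - s * boTh v β a u * (boA u * boR v G a u / (1 + boA u * boR v G a u))
      + 12 * C * S ^ 4 * s ^ 2 ∧
    boNrm (boStU v G β s a u) ≤ (1 + s) * boNrm u := by
  have hgc := boGu_cont hp a u hu
  have hR0 := boR_nonneg v G a u
  have hA0 := boA_nonneg u
  have hUA : boNrm u ^ 2 = 2 * boA u := by unfold boA; ring
  have hRd : boR v G a u = boNrm (boGu v G a u) ^ 2 + ‖boGa G a u‖ ^ 2 := rfl
  have hU0 := boNrm_nonneg u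
  have hth0 : 0 ≤ boTh v β a u := le_min zero_le_one (le_max_left _ _)
  have hth1 : boTh v β a u ≤ 1 := min_le_left _ _
  have hkd : boKap v G β s a u = s * boTh v β a u * boA u / (1 + boA u * boR v G a u) := rfl
  set R := boR v G a u
  set A := boA u
  set U := boNrm u
  set th := boTh v β a u
  set k := boKap v G β s a u
  have hk0 : 0 ≤ k := by rw [hkd]; positivity
  have hAR : 0 ≤ A * R := by positivity
  have hg : ∀ x, 0 ≤ x → x ^ 2 ≤ R → k * x ≤ s * U := by
    intro x hx hxR
    rw [hkd, div_mul_eq_mul_div, div_le_iff₀ (by positivity)]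
    have h1 : A * x ≤ U * (1 + A * R) := by
      have h2 : A = U ^ 2 / 2 := by linarith
      have h3 : U * x ≤ 1 + A * R := by
        have : (U * x) ^ 2 ≤ 2 * (A * R) := by
          rw [mul_pow, hUA]; nlinarith
        nlinarith [sq_nonneg (U * x - 1)]
      calc A * x = U * (U * x) / 2 := by rw [h2]; ring
        _ ≤ U * (U * x) := by
          have : 0 ≤ U * (U * x) := by positivity
          linarith
        _ ≤ _ := by gcongr
    calc s * th * A * x = s * th * (A * x) := by ring
      _ ≤ s * 1 * (U * (1 + A * R)) := by gcongr
      _ = _ := by ring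
  have hgu : boNrm (fun t => (-k) • boGu v G a u t) ≤ s * U := by
    rw [boNrm_smul, abs_neg, abs_of_nonneg hk0]
    exact hg _ (boNrm_nonneg _) (by rw [hRd]; nlinarith [sq_nonneg ‖boGa G a u‖])
  have hga : ‖(-k) • boGa G a u‖ ≤ s * U := by
    rw [norm_smul, norm_neg, Real.norm_of_nonneg hk0]
    exact hg _ (norm_nonneg _) (by rw [hRd]; nlinarith [sq_nonneg (boNrm (boGu v G a u))])
  have hsU : s * U ≤ s * S := by gcongr
  have hcd : Continuous fun t => (-k) • boGu v G a u t := by fun_prop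
  constructor
  · have h := bo_step hp a ((-k) • boGa G a u) u (fun t => (-k) • boGu v G a u t) hu hcd
      (s * S) S hS (by nlinarith) huS (hgu.trans hsU) (hga.trans hsU)
    refine h.trans (le_of_eq ?_)
    have e1 : (∫ t in (0:ℝ)..1, inner ℝ (boGu v G a u t) ((-k) • boGu v G a u t))
        = -k * boNrm (boGu v G a u) ^ 2 := by
      simp only [real_inner_smul_right, real_inner_self_eq_norm_sq]
      rw [intervalIntegral.integral_const_mul, boNrm_sq]
    have e2 : inner ℝ (boGa G a u) ((-k) • boGa G a u) = -k * ‖boGa G a u‖ ^ 2 := by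
      rw [real_inner_smul_right, real_inner_self_eq_norm_sq]
    rw [e1, e2]
    have e3 : -k * boNrm (boGu v G a u) ^ 2 + -k * ‖boGa G a u‖ ^ 2
        = -(s * th * (A * R / (1 + A * R))) := by
      have : -k * boNrm (boGu v G a u) ^ 2 + -k * ‖boGa G a u‖ ^ 2 = -k * R := by
        rw [hRd]; ring
      rw [this, hkd]; ring
    rw [e3]; ring
  · have h := boNrm_add_le u (fun t => (-k) • boGu v G a u t) hu hcd
    have : boNrm (boStU v G β s a u) ≤ U + s * U := h.trans (by linarith)
    linarith

theorem bo_fix (β s : ℝ) (a : F) (u : ℝ → F) (h : boJ v a u ≤ β / 2) :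
    boStA v G β s a u = a ∧ boStU v G β s a u = u := by
  have h1 : boTh v β a u = 0 := by
    unfold boTh
    rw [max_eq_left (by linarith), min_eq_right zero_le_one]
  have h2 : boKap v G β s a u = 0 := by unfold boKap; rw [h1]; simp
  constructor
  · unfold boStA; simp [h2]
  · funext t; unfold boStU; simp [h2]

section fam
variable {Z : Type*} [TopologicalSpace Z] {a : Z → F} {u : Z → ℝ → F}

theorem boNrm_fam (hu : Continuous (Function.uncurry u)) : Continuous fun z => boNrm (u z) := by
  unfold boNrm
  refine Real.continuous_sqrt.comp ?_
  apply intervalIntegral.continuous_parametric_intervalIntegral_of_continuous'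
  exact (hu.norm.pow 2)

theorem boQ_fam (ha : Continuous a) (hu : Continuous (Function.uncurry u)) :
    Continuous fun p : Z × ℝ => boQ (a p.1) (u p.1) p.2 := by
  unfold boQ
  exact (ha.comp continuous_fst).add
    (intervalIntegral.continuous_parametric_primitive_of_continuous hu)

theorem boB_fam (hv : Continuous v) (ha : Continuous a) (hu : Continuous (Function.uncurry u)) :
    Continuous fun z => boB v (a z) (u z) := by
  unfold boB
  refine Continuous.neg ?_
  apply intervalIntegral.continuous_parametric_intervalIntegral_of_continuous'
  exact hv.comp (boQ_fam ha hu)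

theorem boA_fam (hu : Continuous (Function.uncurry u)) : Continuous fun z => boA (u z) := by
  unfold boA
  exact ((boNrm_fam hu).pow 2).div_const 2

theorem boK_fam (hG : Continuous G) (ha : Continuous a) (hu : Continuous (Function.uncurry u)) :
    Continuous fun p : Z × ℝ => boK G (a p.1) (u p.1) p.2 := by
  have : (fun p : Z × ℝ => boK G (a p.1) (u p.1) p.2)
      = fun p => -∫ s in (1:ℝ)..p.2, G (boQ (a p.1) (u p.1) s) := by
    funext p
    unfold boK
    rw [intervalIntegral.integral_symm]
  rw [this]
  refine Continuous.neg ?_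
  exact intervalIntegral.continuous_parametric_primitive_of_continuous
    (f := fun z s => G (boQ (a z) (u z) s)) (hG.comp (boQ_fam ha hu))

theorem boGu_fam (hp : BoPot v G C) (ha : Continuous a) (hu : Continuous (Function.uncurry u)) :
    Continuous (Function.uncurry fun z => boGu v G (a z) (u z)) := by
  have h1 := (boB_fam hp.contv ha hu).comp (continuous_fst (X := Z) (Y := ℝ))
  have h2 := (boA_fam hu).comp (continuous_fst (X := Z) (Y := ℝ))
  exact (h1.smul hu).sub (h2.smul (boK_fam hp.contG ha hu))

theorem boGa_fam (hp : BoPot v G C) (ha : Continuous a) (hu : Continuous (Function.uncurry u)) :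
    Continuous fun z => boGa G (a z) (u z) :=
  ((boA_fam hu).smul ((boK_fam hp.contG ha hu).comp
    (continuous_id.prodMk continuous_const : Continuous fun z : Z => (z, (0:ℝ))))).neg

theorem boKap_fam (hp : BoPot v G C) (β s : ℝ) (ha : Continuous a)
    (hu : Continuous (Function.uncurry u)) :
    Continuous fun z => boKap v G β s (a z) (u z) := by
  have h1 := boA_fam hu
  have h2 := boB_fam hp.contv ha hu
  have h3 : Continuous fun z => boR v G (a z) (u z) :=
    ((boNrm_fam (boGu_fam hp ha hu)).pow 2).add ((boGa_fam hp ha hu).norm.pow 2)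
  have h4 : Continuous fun z => boTh v β (a z) (u z) := by
    unfold boTh boJ
    fun_prop
  unfold boKap
  refine Continuous.div (by fun_prop) (by fun_prop) fun z => ?_
  have := mul_nonneg (boA_nonneg (u z)) (boR_nonneg v G (a z) (u z))
  positivity

theorem boSt_fam (hp : BoPot v G C) (β s : ℝ) (ha : Continuous a)
    (hu : Continuous (Function.uncurry u)) :
    Continuous (fun z => boStA v G β s (a z) (u z)) ∧
    Continuous (Function.uncurry fun z => boStU v G β s (a z) (u z)) := by
  have h1 := boKap_fam hp β s ha hu
  constructor
  · exact ha.add (h1.neg.smul (boGa_fam hp ha hu))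
  · exact hu.add ((h1.neg.comp continuous_fst).smul (boGu_fam hp ha hu))

theorem bo_deform (hp : BoPot v G C) (α β ε S0 : ℝ) (hβ : 0 < β) (hα : β ≤ α) (hε : 0 < ε)
    (hS0 : 1 ≤ S0)
    (hps : ∀ (a : F) (u : ℝ → F), Continuous u → β / 2 ≤ boJ v a u → boJ v a u ≤ α →
      ε ≤ boA u * boR v G a u)
    (a0 : Z → F) (u0 : Z → ℝ → F) (ha0 : Continuous a0) (hu0 : Continuous (Function.uncurry u0))
    (K : Set Z) (hK1 : ∀ z ∈ K, boJ v (a0 z) (u0 z) ≤ α) (hK2 : ∀ z ∈ K, boNrm (u0 z) ≤ S0) :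
    ∃ (a : Z → F) (u : Z → ℝ → F), Continuous a ∧ Continuous (Function.uncurry u) ∧
      (∀ z, boJ v (a0 z) (u0 z) ≤ β / 2 → a z = a0 z ∧ u z = u0 z) ∧
      ∀ z ∈ K, boJ v (a z) (u z) < β := by
  have hC := hp.one_le
  set m := min 1 (β / 4) with hm
  have hmp : 0 < m := lt_min one_pos (by positivity)
  set η := m * (ε / (1 + ε)) / 2 with hη
  have hηp : 0 < η := by positivity
  set S := Real.exp (α / η + 1) * S0 with hS
  have hS1 : 1 ≤ S := by
    have : 1 ≤ Real.exp (α / η + 1) := Real.one_le_exp (by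
      have : 0 ≤ α / η := div_nonneg (hβ.le.trans hα) hηp.le
      linarith)
    nlinarith
  set s := min 1 (min (η / (12 * C * S ^ 4)) (β / (8 * η))) with hs
  have hsp : 0 < s := lt_min one_pos (lt_min (by positivity) (by positivity))
  have hs1 : s ≤ 1 := min_le_left _ _
  have hs2 : 12 * C * S ^ 4 * s ^ 2 ≤ s * η := by
    have h1 : s ≤ η / (12 * C * S ^ 4) := (min_le_right _ _).trans (min_le_left _ _)
    rw [le_div_iff₀ (by positivity)] at h1
    nlinarith
  have hs3 : s * η ≤ β / 8 := by
    have h1 : s ≤ β / (8 * η) := (min_le_right _ _).trans (min_le_right _ _)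
    rw [le_div_iff₀ (by positivity)] at h1
    linarith
  set N := ⌈α / (s * η)⌉₊ with hN
  have hN1 : α ≤ N * (s * η) := by
    have := Nat.le_ceil (α / (s * η))
    rwa [div_le_iff₀ (by positivity)] at this
  have hN2 : N * s ≤ α / η + 1 := by
    have := (Nat.ceil_lt_add_one (a := α / (s * η))
      (div_nonneg (hβ.le.trans hα) (by positivity))).le
    have h1 : (N:ℝ) * s ≤ (α / (s * η) + 1) * s := by gcongr
    have h2 : (α / (s * η) + 1) * s = α / η + s := by field_simp
    linarith
  have hmain : ∀ k : ℕ, k ≤ N → ∃ (a : Z → F) (u : Z → ℝ → F), Continuous a ∧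
      Continuous (Function.uncurry u) ∧
      (∀ z, boJ v (a0 z) (u0 z) ≤ β / 2 → a z = a0 z ∧ u z = u0 z) ∧
      ∀ z ∈ K, boNrm (u z) ≤ (1 + s) ^ k * S0 ∧
        boJ v (a z) (u z) ≤ max (α - k * (s * η)) (7 * β / 8) := by
    intro k
    induction k with
    | zero =>
      intro _
      refine ⟨a0, u0, ha0, hu0, fun z _ => ⟨rfl, rfl⟩, fun z hz => ⟨by simpa using hK2 z hz, ?_⟩⟩
      exact le_max_of_le_left (by simpa using hK1 z hz)
    | succ k ih =>
      intro hk
      obtain ⟨a, u, ha, hu, hfix, hb⟩ := ih (by omega)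
      obtain ⟨ha', hu'⟩ := boSt_fam hp β s ha hu
      refine ⟨fun z => boStA v G β s (a z) (u z), fun z => boStU v G β s (a z) (u z), ha', hu',
        ?_, ?_⟩
      · intro z hz
        obtain ⟨e1, e2⟩ := hfix z hz
        have := bo_fix (v := v) (G := G) β s (a0 z) (u0 z) hz
        simp only [e1, e2]
        exact this
      · intro z hz
        obtain ⟨hb1, hb2⟩ := hb z hz
        have huz : Continuous (u z) := hu.comp (by fun_prop : Continuous fun t : ℝ => (z, t))
        have hbS : boNrm (u z) ≤ S := by
          refine hb1.trans ?_
          rw [hS]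
          gcongr
          calc (1 + s) ^ k ≤ Real.exp s ^ k := by
                gcongr
                linarith [Real.add_one_le_exp s]
            _ = Real.exp (k * s) := by rw [Real.exp_nat_mul]
            _ ≤ _ := by
                apply Real.exp_le_exp.mpr
                refine le_trans ?_ hN2
                gcongr
                omega
        obtain ⟨d1, d2⟩ := bo_dec hp β s S hsp.le hs1 hS1 (a z) (u z) huz hbS
        constructor
        · refine d2.trans ?_
          calc (1 + s) * boNrm (u z) ≤ (1 + s) * ((1 + s) ^ k * S0) := by gcongr
            _ = _ := by ring
        · refine d1.trans ?_
          have hy0 := mul_nonneg (boA_nonneg (u z)) (boR_nonneg v G (a z) (u z))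
          set y := boA (u z) * boR v G (a z) (u z) with hy
          have hth0 : 0 ≤ boTh v β (a z) (u z) := le_min zero_le_one (le_max_left _ _)
          rcases lt_or_ge (boJ v (a z) (u z)) (3 * β / 4) with h | h
          · apply le_max_of_le_right
            have : 0 ≤ s * boTh v β (a z) (u z) * (y / (1 + y)) := by positivity
            linarith
          · have hJα : boJ v (a z) (u z) ≤ α := by
              refine hb2.trans (max_le ?_ (by linarith))
              have : 0 ≤ k * (s * η) := by positivity
              linarith
            have hyε := hps (a z) (u z) huz (by linarith) hJα
            rw [← hy] at hyε
            have hth : m ≤ boTh v β (a z) (u z) := by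
              rw [hm]
              unfold boTh
              refine min_le_min_left _ (le_max_of_le_right ?_)
              linarith
            have hfrac : ε / (1 + ε) ≤ y / (1 + y) := by
              rw [div_le_div_iff₀ (by positivity) (by positivity)]
              nlinarith
            have hdec : 2 * (s * η) ≤ s * boTh v β (a z) (u z) * (y / (1 + y)) := by
              calc 2 * (s * η) = s * m * (ε / (1 + ε)) := by rw [hη]; ring
                _ ≤ _ := by gcongr
            rcases le_max_iff.mp hb2 with h' | h'
            · apply le_max_of_le_left
              push_cast
              linarith
            · apply le_max_of_le_right
              have : 0 < s * η := by positivity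
              linarith
  obtain ⟨a, u, ha, hu, hfix, hb⟩ := hmain N le_rfl
  refine ⟨a, u, ha, hu, hfix, fun z hz => ((hb z hz).2).trans_lt ?_⟩
  apply max_lt <;> linarith

end fam
end deform

section link

variable {F : Type*} [NormedAddCommGroup F] [InnerProductSpace ℝ F]
variable {v : F → ℝ} {G : F → F} {C : ℝ}

theorem boNrm_const (x : F) : boNrm (fun _ => x) = ‖x‖ := by
  simp [boNrm]

theorem bo_link [CompleteSpace F] (hp : BoPot v G C) (z0 : F) (r δ : ℝ)
    (hr : ∀ x, ‖x - z0‖ ≤ r → v x ≤ -δ) (u : ℝ → F) (hu : Continuous u) (hur : boNrm u = r) :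
    r ^ 2 * δ / 2 ≤ boJ v z0 u := by
  have hQ := boQ_cont z0 u hu
  have hv := hp.contv
  have h1 : ∫ t in (0:ℝ)..1, v (boQ z0 u t) ≤ ∫ t in (0:ℝ)..1, -δ := by
    apply intervalIntegral.integral_mono_on zero_le_one
    · apply Continuous.intervalIntegrable; fun_prop
    · exact intervalIntegrable_const
    · intro t ht
      apply hr
      have := bo_norm_integral_le u hu t ht
      unfold boQ
      rw [add_sub_cancel_left]
      linarith
  simp only [intervalIntegral.integral_const, sub_zero, one_smul] at h1
  unfold boJ boA boB
  rw [hur]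
  have h2 : δ ≤ -∫ t in (0:ℝ)..1, v (boQ z0 u t) := by linarith
  have h3 : r ^ 2 / 2 * δ ≤ r ^ 2 / 2 * -∫ t in (0:ℝ)..1, v (boQ z0 u t) := by gcongr
  linarith

theorem bo_bdry [CompleteSpace F] (hp : BoPot v G C) (ρ : ℝ) (hρ : 0 < ρ)
    (hout : ∀ x, ρ < ‖x‖ → v x = 1) (a v0 : F) (hv0 : ‖v0‖ = 1) (b : ℝ) (hb : 0 ≤ b)
    (h : 8 * (1 + C) * ρ ≤ b ∨ ρ + b < ‖a‖) : boJ v a (fun _ => b • v0) ≤ 0 := by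
  have hC := hp.one_le
  have hv := hp.contv
  have hQ := boQ_cont a (fun _ => b • v0) continuous_const
  have hq : ∀ t, boQ a (fun _ => b • v0) t = a + (t * b) • v0 := by
    intro t
    unfold boQ
    rw [intervalIntegral.integral_const, sub_zero, smul_smul]
  suffices hs : 0 ≤ ∫ t in (0:ℝ)..1, v (boQ a (fun _ => b • v0) t) by
    unfold boJ
    apply mul_nonpos_of_nonneg_of_nonpos (boA_nonneg _)
    unfold boB
    linarith
  rcases h with h | h
  · have hbp : 0 < b := lt_of_lt_of_le (by positivity) h
    set m := inner ℝ a v0 with hm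
    have h1 : ∫ t in (0:ℝ)..1, (1 - (1 + C) * 2 * (1 + (b / ρ * t + m / ρ) ^ 2)⁻¹)
        ≤ ∫ t in (0:ℝ)..1, v (boQ a (fun _ => b • v0) t) := by
      apply intervalIntegral.integral_mono_on zero_le_one
      · apply Continuous.intervalIntegrable
        refine Continuous.sub continuous_const (continuous_const.mul ?_)
        refine Continuous.inv₀ (by fun_prop) fun t => by positivity
      · apply Continuous.intervalIntegrable; fun_prop
      · intro t ht
        rcases lt_or_ge ρ ‖boQ a (fun _ => b • v0) t‖ with h2 | h2
        · rw [hout _ h2]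
          have : 0 ≤ (1 + C) * 2 * (1 + (b / ρ * t + m / ρ) ^ 2)⁻¹ := by positivity
          linarith
        · have h3 : |inner ℝ (boQ a (fun _ => b • v0) t) v0| ≤ ρ := by
            refine (abs_real_inner_le_norm _ _).trans ?_
            rw [hv0, mul_one]; exact h2
          have h4 : inner ℝ (boQ a (fun _ => b • v0) t) v0 = m + t * b := by
            rw [hq, inner_add_left, real_inner_smul_left, real_inner_self_eq_norm_sq, hv0]
            simp [hm]
          rw [h4] at h3
          have h5 : (b / ρ * t + m / ρ) ^ 2 ≤ 1 := by
            have e : b / ρ * t + m / ρ = (m + t * b) / ρ := by ring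
            rw [e, div_pow, div_le_one (by positivity)]
            exact sq_le_sq' (abs_le.mp h3).1 (abs_le.mp h3).2
          have h6 : 1 ≤ 2 * (1 + (b / ρ * t + m / ρ) ^ 2)⁻¹ := by
            rw [← div_eq_mul_inv, le_div_iff₀ (by positivity)]
            linarith
          have h7 := (abs_le.mp (hp.vb (boQ a (fun _ => b • v0) t))).1
          nlinarith
    refine le_trans ?_ h1
    rw [intervalIntegral.integral_sub intervalIntegrable_const, intervalIntegral.integral_const_mul,
      intervalIntegral.integral_comp_mul_add (fun x => (1 + x ^ 2)⁻¹) (by positivity),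
      integral_inv_one_add_sq]
    · simp only [intervalIntegral.integral_const, sub_zero, smul_eq_mul, inv_div, mul_one]
      set X := Real.arctan (b / ρ + m / ρ) - Real.arctan (b / ρ * 0 + m / ρ) with hX
      have hX4 : X ≤ 4 := by
        have h1 := Real.arctan_lt_pi_div_two (b / ρ + m / ρ)
        have h2 := Real.neg_pi_div_two_lt_arctan (b / ρ * 0 + m / ρ)
        have := Real.pi_le_four
        linarith
      have h8 : (1 + C) * 2 * (ρ / b * X) ≤ (1 + C) * 2 * (ρ / b * 4) := by gcongr
      have h9 : (1 + C) * 2 * (ρ / b * 4) ≤ 1 := by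
        have e : (1 + C) * 2 * (ρ / b * 4) = 8 * (1 + C) * ρ / b := by ring
        rw [e, div_le_one hbp]
        exact h
      linarith
    · apply Continuous.intervalIntegrable
      refine (continuous_const.mul ?_)
      refine Continuous.inv₀ (by fun_prop) fun t => by positivity
  · apply intervalIntegral.integral_nonneg zero_le_one
    intro t ht
    rw [hout]
    · norm_num
    rw [hq]
    have h1 : ‖(t * b) • v0‖ ≤ b := by
      rw [norm_smul, hv0, mul_one, Real.norm_of_nonneg (mul_nonneg ht.1 hb)]
      nlinarith [ht.2]
    have h2 := norm_sub_le (a + (t * b) • v0) ((t * b) • v0)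
    rw [add_sub_cancel_right] at h2
    linarith

theorem bo_exists [FiniteDimensional ℝ F] (hp : BoPot v G C) (κ c ρ : ℝ) (hκ : 0 < κ) (hc : 0 < c)
    (hreg : ∀ x, |v x| ≤ κ → c ≤ ‖G x‖) (hρ : 0 < ρ) (hout : ∀ x, ρ < ‖x‖ → v x = 1)
    (v0 : F) (hv0 : ‖v0‖ = 1) (z0 : F) (hz0 : v z0 < 0) : BoOrbit v G := by
  have hcs : CompleteSpace F := FiniteDimensional.complete ℝ F
  have hC := hp.one_le
  have hv := hp.contv
  by_contra hno
  -- the small ball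
  obtain ⟨r, hr, hball⟩ : ∃ r, 0 < r ∧ ∀ x, ‖x - z0‖ ≤ r → v x ≤ -(-v z0 / 2) := by
    have h1 : {x | v x < v z0 / 2} ∈ nhds z0 :=
      (isOpen_lt hv continuous_const).mem_nhds (by simp only [mem_setOf_eq]; linarith)
    obtain ⟨r, hr, hsub⟩ := Metric.nhds_basis_closedBall.mem_iff.mp h1
    refine ⟨r, hr, fun x hx => ?_⟩
    have := hsub (mem_closedBall_iff_norm.mpr hx)
    simp only [mem_setOf_eq] at this
    linarith
  set δ := -v z0 / 2 with hδ
  have hδp : 0 < δ := by rw [hδ]; linarith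
  set β := r ^ 2 * δ / 2 with hβ
  have hβp : 0 < β := by positivity
  set L := 8 * (1 + C) * ρ with hL
  have hLp : 0 < L := by positivity
  set R := (L + r) + (ρ + L + ‖z0‖) + 1 with hR
  have hRp : 0 < R := by positivity
  have hrR : r < R := by have := norm_nonneg z0; rw [hR]; linarith
  let Z := WithLp 2 (F × ℝ)
  let a0 : Z → F := fun z => z0 + z.fst
  let u0 : Z → ℝ → F := fun z _ => max (r + z.snd) 0 • v0
  have hfst : Continuous fun z : Z => z.fst := by fun_prop
  have hsnd : Continuous fun z : Z => z.snd := by fun_prop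
  have ha0 : Continuous a0 := by fun_prop
  have hu0 : Continuous (Function.uncurry u0) := by
    have h1 : Continuous fun z : Z => max (r + z.snd) 0 • v0 :=
      ((continuous_const.add hsnd).max continuous_const).smul continuous_const
    exact h1.comp continuous_fst
  have hnorm : ∀ z : Z, ‖z‖ ^ 2 = ‖z.fst‖ ^ 2 + z.snd ^ 2 := fun z => by
    have := WithLp.prod_norm_sq_eq_of_L2 z
    rw [this, Real.norm_eq_abs, sq_abs]
  have hN0 : ∀ z : Z, boNrm (u0 z) = max (r + z.snd) 0 := fun z => by
    simp only [u0]
    rw [boNrm_const, norm_smul, hv0, mul_one, Real.norm_of_nonneg (le_max_right _ _)]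
  have hNle : ∀ z ∈ Metric.closedBall (0:Z) R, boNrm (u0 z) ≤ r + R := fun z hz => by
    rw [hN0]
    rw [mem_closedBall_zero_iff] at hz
    apply max_le _ (by positivity)
    have h1 : z.snd ^ 2 ≤ R ^ 2 := by
      have h2 : ‖z‖ ^ 2 ≤ R ^ 2 := by gcongr
      have := hnorm z
      nlinarith [sq_nonneg ‖z.fst‖]
    have := abs_le_of_sq_le_sq' h1 hRp.le
    linarith [this.2]
  set α := max β ((r + R) ^ 2 / 2 * C) with hα
  have hJα : ∀ z ∈ Metric.closedBall (0:Z) R, boJ v (a0 z) (u0 z) ≤ α := fun z hz => by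
    apply le_max_of_le_right
    have h1 := hNle z hz
    have h2 := (abs_le.mp (boB_abs hp (a0 z) (u0 z))).2
    unfold boJ
    have h3 : boA (u0 z) ≤ (r + R) ^ 2 / 2 := by
      have := boNrm_nonneg (u0 z)
      unfold boA
      gcongr
    calc _ ≤ boA (u0 z) * C := mul_le_mul_of_nonneg_left h2 (boA_nonneg _)
      _ ≤ _ := by gcongr
  have hbd : ∀ z : Z, ‖z‖ = R → boJ v (a0 z) (u0 z) ≤ 0 := by
    intro z hz
    by_cases hneg : r + z.snd ≤ 0
    · have h1 := hN0 z
      rw [max_eq_right hneg] at h1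
      unfold boJ boA
      rw [h1]
      simp
    refine bo_bdry hp ρ hρ hout (a0 z) v0 hv0 _ (le_max_right _ _) ?_
    rcases le_or_gt L (max (r + z.snd) 0) with h | h
    · exact Or.inl h
    · · right
        push Not at hneg
        rw [max_eq_left hneg.le] at h ⊢
        have h1 := hnorm z
        rw [hz] at h1
        have h2 : z.snd ^ 2 ≤ (L + r) ^ 2 := by
          apply sq_le_sq' <;> linarith
        have h3 : (ρ + L + ‖z0‖) ^ 2 < ‖z.fst‖ ^ 2 := by
          have : 0 ≤ ‖z0‖ := norm_nonneg _
          have : 0 ≤ (L + r) * (ρ + L + ‖z0‖) := by positivity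
          nlinarith
        have h4 := lt_of_pow_lt_pow_left₀ 2 (norm_nonneg _) h3
        have h5 : ‖z.fst‖ ≤ ‖a0 z‖ + ‖z0‖ := by
          have := norm_sub_le (a0 z) z0
          simpa [a0] using this
        linarith
  obtain ⟨ε, hε, hps⟩ := bo_ps hp κ c ρ hκ hc hreg (fun x hx => by
    by_contra hcon
    push Not at hcon
    rw [hout x hcon] at hx
    linarith) α (β / 2) (by positivity) hno
  obtain ⟨a, u, ha, hu, hfix, hlow⟩ := bo_deform hp α β ε (max 1 (r + R)) hβp (le_max_left _ _) hε
    (le_max_left _ _) hps a0 u0 ha0 hu0 (Metric.closedBall 0 R) hJα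
    (fun z hz => (hNle z hz).trans (le_max_right _ _))
  let Φ : Z → Z := fun z => WithLp.toLp 2 (a z - z0, boNrm (u z) - r)
  have hΦ : Continuous Φ := by
    have := boNrm_fam hu
    exact (WithLp.prod_continuous_toLp 2 F ℝ).comp ((ha.sub continuous_const).prodMk (this.sub continuous_const))
  obtain ⟨z, hzR, hz0⟩ := bo_hit Φ hΦ R hRp (by
    intro z hz p q hp0 hq0 hpq heq
    obtain ⟨e1, e2⟩ := hfix z ((hbd z hz).trans (by positivity))
    have f1 : p • (a z - z0) + q • z.fst = 0 := congrArg WithLp.fst heq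
    have f2 : p * (boNrm (u z) - r) + q * z.snd = 0 := congrArg WithLp.snd heq
    rw [e1] at f1
    rw [e2, hN0] at f2
    simp only [a0, add_sub_cancel_left] at f1
    rw [← add_smul, smul_eq_zero] at f1
    have g1 : z.fst = 0 := f1.resolve_left hpq.ne'
    have g2 := hnorm z
    rw [g1, hz, norm_zero] at g2
    have g3 : (z.snd - R) * (z.snd + R) = 0 := by linarith
    rcases mul_eq_zero.mp g3 with g | g
    · have : z.snd = R := by linarith
      rw [this, max_eq_left (by positivity)] at f2
      nlinarith
    · have : z.snd = -R := by linarith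
      rw [this, max_eq_right (by linarith)] at f2
      rcases hp0.eq_or_lt with h | h
      · nlinarith
      · nlinarith)
  have g1 : a z - z0 = 0 := congrArg WithLp.fst hz0
  have g2 : boNrm (u z) - r = 0 := congrArg WithLp.snd hz0
  have h1 := hlow z (mem_closedBall_zero_iff.mpr hzR)
  have h2 := bo_link hp z0 r δ hball (u z)
    (hu.comp (by fun_prop : Continuous fun t : ℝ => (z, t))) (by linarith)
  rw [sub_eq_zero.mp g1] at h1
  linarith

end link

section final

/-- Bounded continuous data from a function which is constant outside a ball. -/
theorem bo_bdd {E H : Type*} [NormedAddCommGroup E] [ProperSpace E] [NormedAddCommGroup H]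
    (f : E → H) (hf : Continuous f) (ρ : ℝ) (y : H) (hout : ∀ x, ρ < ‖x‖ → f x = y) :
    ∃ M, ∀ x, ‖f x‖ ≤ M := by
  obtain ⟨M, hM⟩ := (isCompact_closedBall (0:E) ρ).exists_bound_of_continuousOn hf.continuousOn
  refine ⟨max M ‖y‖, fun x => ?_⟩
  rcases lt_or_ge ρ ‖x‖ with h | h
  · rw [hout x h]; exact le_max_right _ _
  · exact (hM x (mem_closedBall_zero_iff.mpr h)).trans (le_max_left _ _)

theorem bo_pot {E : Type*} [NormedAddCommGroup E] [InnerProductSpace ℝ E] [FiniteDimensional ℝ E]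
    (V : E → ℝ) (hV : ContDiff ℝ (⊤ : ℕ∞) V) (h : ℝ) (ρ : ℝ) (hρ : 0 < ρ)
    (hD : ∀ x, V x ≤ h → ‖x‖ ≤ ρ) (hreg : ∀ x, V x = h → gradient V x ≠ 0)
    (hmeet : ∃ x, V x = h) :
    ∃ (v : E → ℝ) (G : E → E) (C κ c : ℝ), BoPot v G C ∧ 0 < κ ∧ 0 < c ∧
      (∀ x, |v x| ≤ κ → c ≤ ‖G x‖) ∧ (∀ x, ρ + 2 < ‖x‖ → v x = 1) ∧
      (∃ x, v x < 0) ∧ (∀ x, v x ≤ 0 → V x = v x + h ∧ gradient V x = G x) := by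
  have hcs : CompleteSpace E := FiniteDimensional.complete ℝ E
  have hps : ProperSpace E := FiniteDimensional.proper ℝ E
  let φ : ContDiffBump (0:E) := ⟨ρ + 1, ρ + 2, by positivity, by linarith⟩
  let v : E → ℝ := fun x => 1 + φ x * (V x - h - 1)
  have hvs : ContDiff ℝ (⊤ : ℕ∞) v := by
    have : ContDiff ℝ (⊤ : ℕ∞) φ := φ.contDiff
    fun_prop
  have hvc := hvs.continuous
  have hout : ∀ x, ρ + 2 < ‖x‖ → v x = 1 := by
    intro x hx
    have : φ x = 0 := φ.zero_of_le_dist (by rw [dist_zero_right]; exact hx.le)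
    simp [v, this]
  have hin : ∀ x, ‖x‖ ≤ ρ + 1 → v x = V x - h := by
    intro x hx
    have : φ x = 1 := φ.one_of_mem_closedBall (mem_closedBall_zero_iff.mpr hx)
    simp only [v, this]; ring
  have hneg : ∀ x, v x ≤ 0 → ‖x‖ ≤ ρ := by
    intro x hx
    by_contra hcon
    push Not at hcon
    have h1 : h < V x := by
      by_contra h2
      push Not at h2
      linarith [hD x h2]
    have h2 : 0 ≤ φ x := φ.nonneg
    have h3 : φ x ≤ 1 := φ.le_one
    simp only [v] at hx
    rcases h2.eq_or_lt with h4 | h4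
    · rw [← h4] at hx; linarith
    · nlinarith
  let G : E → E := fun x => gradient v x
  have hGe : ∀ x, G x = (InnerProductSpace.toDual ℝ E).symm (fderiv ℝ v x) := fun x => rfl
  have hGs : ContDiff ℝ 1 G := by
    have h1 : ContDiff ℝ 1 (fderiv ℝ v) := hvs.fderiv_right (by norm_cast)
    exact ((InnerProductSpace.toDual ℝ E).symm.contDiff).comp h1
  have hGc := hGs.continuous
  have hGV : ∀ x, v x ≤ 0 → V x = v x + h ∧ gradient V x = G x := by
    intro x hx
    have h1 := hneg x hx
    refine ⟨by rw [hin x (by linarith)]; ring, ?_⟩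
    have h2 : v =ᶠ[nhds x] fun y => V y - h := by
      filter_upwards [(isOpen_lt continuous_norm continuous_const).mem_nhds
        (show ‖x‖ < ρ + 1 by linarith)] with y hy
      exact hin y (le_of_lt hy)
    simp only [G, gradient]
    rw [h2.fderiv_eq, fderiv_sub_const]
  have hev : ∀ x, ρ + 2 < ‖x‖ → v =ᶠ[nhds x] fun _ => 1 := fun x hx => by
    filter_upwards [(isOpen_lt continuous_const continuous_norm).mem_nhds hx] with y hy
    exact hout y hy
  have hG0 : ∀ x, ρ + 2 < ‖x‖ → G x = 0 := fun x hx => by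
    rw [hGe, (hev x hx).fderiv_eq]; simp
  have hDG0 : ∀ x, ρ + 2 < ‖x‖ → fderiv ℝ G x = 0 := fun x hx => by
    have : G =ᶠ[nhds x] fun _ => 0 := by
      filter_upwards [(isOpen_lt continuous_const continuous_norm).mem_nhds hx] with y hy
      exact hG0 y hy
    rw [this.fderiv_eq]; simp
  have hDc : Continuous (fderiv ℝ G) := hGs.continuous_fderiv one_ne_zero
  obtain ⟨M1, hM1⟩ := bo_bdd v hvc (ρ + 2) 1 hout
  obtain ⟨M2, hM2⟩ := bo_bdd G hGc (ρ + 2) 0 hG0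
  obtain ⟨M3, hM3⟩ := bo_bdd (fderiv ℝ G) hDc (ρ + 2) 0 hDG0
  have hgrad : ∀ x, HasFDerivAt v (innerSL ℝ (G x)) x := fun x => by
    have h1 : DifferentiableAt ℝ v x := (hvs.differentiable (by simp)) x
    have h2 := h1.hasGradientAt.hasFDerivAt
    exact h2
  have hpot : BoPot v G (max 1 (max M1 (max M2 M3))) :=
    ⟨le_max_left _ _, hgrad, hGs.differentiable one_ne_zero,
      fun x => (hM1 x).trans (by simp), fun x => (hM2 x).trans (by simp),
      fun x => (hM3 x).trans (by simp), hDc⟩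
  have hreg' : ∀ x, v x = 0 → G x ≠ 0 := fun x hx => by
    obtain ⟨h1, h2⟩ := hGV x hx.le
    rw [← h2]
    exact hreg x (by rw [h1, hx, zero_add])
  -- uniform regularity
  have hunif : ∃ κ : ℝ, 0 < κ ∧ ∀ x, |v x| ≤ κ → κ ≤ ‖G x‖ := by
    have hcpt : IsCompact (Metric.closedBall (0:E) (ρ + 2)) := isCompact_closedBall _ _
    have hpos : ∀ x ∈ Metric.closedBall (0:E) (ρ + 2), 0 < max |v x| ‖G x‖ := by
      intro x _
      by_cases hx : v x = 0
      · exact lt_max_of_lt_right (norm_pos_iff.mpr (hreg' x hx))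
      · exact lt_max_of_lt_left (abs_pos.mpr hx)
    obtain ⟨x0, hx0, hmin⟩ := hcpt.exists_isMinOn ⟨0, by simp; positivity⟩
      (f := fun x => max |v x| ‖G x‖) (by fun_prop)
    set m := max |v x0| ‖G x0‖ with hm
    have hmp : 0 < m := hpos x0 hx0
    refine ⟨min m 1 / 2, by positivity, fun x hx => ?_⟩
    have hlt : min m 1 / 2 < min m 1 := half_lt_self (by positivity)
    by_cases hxb : ‖x‖ ≤ ρ + 2
    · have h1 : m ≤ max |v x| ‖G x‖ := hmin (mem_closedBall_zero_iff.mpr hxb)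
      rcases le_max_iff.mp h1 with h2 | h2
      · linarith [min_le_left m 1]
      · linarith [min_le_left m 1]
    · push Not at hxb
      rw [hout x hxb, abs_one] at hx
      linarith [min_le_right m 1]
  obtain ⟨κ, hκ, hunif⟩ := hunif
  refine ⟨v, G, _, κ, κ, hpot, hκ, hκ, hunif, hout, ?_, hGV⟩
  obtain ⟨x0, hx0⟩ := hmeet
  have hv0 : v x0 = 0 := by rw [hin x0 (by linarith [hD x0 hx0.le]), hx0, sub_self]
  by_contra hcon
  push Not at hcon
  have hmin : IsLocalMin v x0 := Filter.Eventually.of_forall fun y => by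
    rw [hv0]; exact hcon y
  have h1 := hmin.fderiv_eq_zero
  exact hreg' x0 hv0 (by rw [hGe, h1]; simp)

end final

theorem bo_final {E : Type*} [NormedAddCommGroup E] [InnerProductSpace ℝ E]
    (v : E → ℝ) (G : E → E) (hG : Continuous G) (horb : BoOrbit v G) :
    ∃ l : ℝ, 0 < l ∧ ∃ q : ℝ → E,
      ContDiffOn ℝ 2 q (Icc 0 l) ∧
      (∃ t ∈ Icc (0:ℝ) l, q t ≠ q 0) ∧
      (∀ t ∈ Icc (0:ℝ) l,
        derivWithin (derivWithin q (Icc 0 l)) (Icc 0 l) t = -G (q t)) ∧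
      derivWithin q (Icc 0 l) 0 = 0 ∧
      derivWithin q (Icc 0 l) l = 0 ∧ (∀ t ∈ Icc (0:ℝ) l, v (q t) ≤ 0) ∧ v (q 0) = 0 := by
  obtain ⟨lam, hlam, q, w, hq, hw, hw0, hw1, hneg, hv0, t0, ht0, hwt0⟩ := horb
  set σ := Real.sqrt lam with hσ
  have hσp : 0 < σ := Real.sqrt_pos.mpr hlam
  have hσ2 : σ ^ 2 = lam := Real.sq_sqrt hlam.le
  have hmem : ∀ t ∈ Icc (0:ℝ) σ, t / σ ∈ Icc (0:ℝ) 1 := fun t ht =>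
    ⟨div_nonneg ht.1 hσp.le, (div_le_one hσp).mpr ht.2⟩
  have hud : UniqueDiffOn ℝ (Icc (0:ℝ) σ) := uniqueDiffOn_Icc hσp
  have hdiv : ∀ t, HasDerivAt (fun t : ℝ => t / σ) (σ⁻¹) t := fun t => by
    simpa using (hasDerivAt_id t).div_const σ
  have hQ : ∀ t ∈ Icc (0:ℝ) σ, HasDerivAt (fun t => q (t / σ)) (σ⁻¹ • w (t / σ)) t :=
    fun t ht => (hq _ (hmem t ht)).scomp t (hdiv t)
  have hP : ∀ t ∈ Icc (0:ℝ) σ, HasDerivAt (fun t => σ⁻¹ • w (t / σ)) (-G (q (t / σ))) t := by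
    intro t ht
    have h1 := ((hw _ (hmem t ht)).scomp t (hdiv t)).const_smul σ⁻¹
    refine h1.congr_deriv ?_
    rw [← hσ2, smul_neg, smul_neg, smul_smul, smul_smul]
    have : σ⁻¹ * σ⁻¹ * σ ^ 2 = 1 := by field_simp
    rw [this, one_smul]
  have hd1 : ∀ t ∈ Icc (0:ℝ) σ, derivWithin (fun t => q (t / σ)) (Icc 0 σ) t = σ⁻¹ • w (t / σ) :=
    fun t ht => (hQ t ht).hasDerivWithinAt.derivWithin (hud t ht)
  have hd2' : ∀ t ∈ Icc (0:ℝ) σ, HasDerivWithinAt (derivWithin (fun t => q (t / σ)) (Icc 0 σ))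
      (-G (q (t / σ))) (Icc 0 σ) t := fun t ht =>
    (hP t ht).hasDerivWithinAt.congr hd1 (hd1 t ht)
  have hd2 : ∀ t ∈ Icc (0:ℝ) σ, derivWithin (derivWithin (fun t => q (t / σ)) (Icc 0 σ))
      (Icc 0 σ) t = -G (q (t / σ)) := fun t ht => (hd2' t ht).derivWithin (hud t ht)
  have m0 : (0:ℝ) ∈ Icc (0:ℝ) σ := ⟨le_rfl, hσp.le⟩
  have m1 : σ ∈ Icc (0:ℝ) σ := ⟨hσp.le, le_rfl⟩
  refine ⟨σ, hσp, fun t => q (t / σ), ?_, ?_, hd2, ?_, ?_, ?_, ?_⟩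
  · have h2 : (2 : WithTop ℕ∞) = 1 + 1 := by norm_num
    rw [h2, contDiffOn_succ_iff_derivWithin hud]
    refine ⟨fun t ht => (hQ t ht).differentiableAt.differentiableWithinAt, by simp, ?_⟩
    have h1 : (1 : WithTop ℕ∞) = 0 + 1 := by norm_num
    rw [h1, contDiffOn_succ_iff_derivWithin hud]
    refine ⟨fun t ht => (hd2' t ht).differentiableWithinAt, by simp, ?_⟩
    rw [contDiffOn_zero]
    refine ContinuousOn.congr ?_ hd2
    intro t ht
    exact (hG.continuousAt.comp (hQ t ht).continuousAt).neg.continuousWithinAt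
  · by_contra hcon
    push Not at hcon
    have ht : t0 * σ ∈ Icc (0:ℝ) σ := ⟨mul_nonneg ht0.1 hσp.le, by nlinarith [ht0.2]⟩
    have h1 : derivWithin (fun t => q (t / σ)) (Icc 0 σ) (t0 * σ) = 0 := by
      have : HasDerivWithinAt (fun t => q (t / σ)) 0 (Icc 0 σ) (t0 * σ) :=
        (hasDerivWithinAt_const (t0 * σ) (Icc 0 σ) (q (0 / σ))).congr hcon (hcon _ ht)
      exact this.derivWithin (hud _ ht)
    rw [hd1 _ ht, mul_div_cancel_right₀ _ hσp.ne', smul_eq_zero] at h1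
    exact hwt0 (h1.resolve_left (inv_ne_zero hσp.ne'))
  · rw [hd1 0 m0, zero_div, hw0, smul_zero]
  · rw [hd1 σ m1, div_self hσp.ne', hw1, smul_zero]
  · intro t ht
    exact hneg _ (hmem t ht)
  · simpa using hv0

theorem brake_orbit_exists
    (n : ℕ) (hn : 1 ≤ n)
    (V : EuclideanSpace ℝ (Fin n) → ℝ) (hV : ContDiff ℝ (⊤ : ℕ∞) V) (h : ℝ)
    (hcompact : IsCompact
      {x : EuclideanSpace ℝ (Fin n) × EuclideanSpace ℝ (Fin n) | V x.1 + ‖x.2‖ ^ 2 / 2 = h})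
    (hreg : ∀ x : EuclideanSpace ℝ (Fin n) × EuclideanSpace ℝ (Fin n),
      V x.1 + ‖x.2‖ ^ 2 / 2 = h → ¬(gradient V x.1 = 0 ∧ x.2 = 0))
    (hmeet : ∃ q₀ : EuclideanSpace ℝ (Fin n), V q₀ = h) :
    ∃ l : ℝ, 0 < l ∧ ∃ q : ℝ → EuclideanSpace ℝ (Fin n),
      ContDiffOn ℝ 2 q (Icc 0 l) ∧
      (∃ t ∈ Icc (0:ℝ) l, q t ≠ q 0) ∧
      (∀ t ∈ Icc (0:ℝ) l,
        derivWithin (derivWithin q (Icc 0 l)) (Icc 0 l) t = -gradient V (q t)) ∧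
      derivWithin q (Icc 0 l) 0 = 0 ∧
      derivWithin q (Icc 0 l) l = 0 ∧
      V (q 0) + ‖derivWithin q (Icc 0 l) 0‖ ^ 2 / 2 = h := by
  have hv0 : ‖EuclideanSpace.single (⟨0, hn⟩ : Fin n) (1:ℝ)‖ = 1 := by simp
  set v0 := EuclideanSpace.single (⟨0, hn⟩ : Fin n) (1:ℝ) with hv0d
  obtain ⟨ρ, hρ⟩ := hcompact.isBounded.exists_norm_le
  have hD : ∀ x, V x ≤ h → ‖x‖ ≤ max ρ 1 := by
    intro x hx
    have h1 := hρ (x, Real.sqrt (2 * (h - V x)) • v0) (by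
      simp only [mem_setOf_eq]
      rw [norm_smul, hv0, mul_one, Real.norm_of_nonneg (Real.sqrt_nonneg _),
        Real.sq_sqrt (by linarith)]
      ring)
    exact ((norm_fst_le (x, Real.sqrt (2 * (h - V x)) • v0)).trans h1).trans (le_max_left _ _)
  obtain ⟨v, G, C, κ, c, hp, hκ, hc, hun, hout, ⟨z0, hz0⟩, hVG⟩ := bo_pot V hV h (max ρ 1)
    (by positivity) hD (fun x hx hg => hreg (x, 0) (by simpa using hx) ⟨hg, rfl⟩) hmeet
  have horb := bo_exists hp κ c (max ρ 1 + 2) hκ hc hun (by positivity) hout v0 hv0 z0 hz0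
  obtain ⟨l, hl, q, h1, h2, h3, h4, h5, h6, h7⟩ := bo_final v G hp.contG horb
  refine ⟨l, hl, q, h1, h2, ?_, h4, h5, ?_⟩
  · intro t ht
    rw [h3 t ht, (hVG _ (h6 t ht)).2]
  · rw [h4, (hVG _ h7.le).1, h7]
    simp
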